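/- arXiv:1002.1544 — 5 statements merged into one kernel-verified Lean document; each statement's English description precedes it below -/
import Mathlib

section
/- For every integer N ≥ 1 and every real 1 ≤ p < ∞, the canonical coordinate map 𝒞_N : 𝔹_{N,p} → (-1,1)^N defined by c_1 = x_1 and c_k = x_k / (1 - ∑_{i=1}^{k-1} |x_i|^p)^{1/p} for 2 ≤ k ≤ N is a bijection from 𝔹_{N,p} onto (-1,1)^N, whose inverse is given by [𝒞_N^{-1}(c)]_k = c_k · ((1-|c_1|^p)(1-|c_2|^p)⋯(1-|c_{k-1}|^p))^{1/p} for k = 1, …, N. -/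
/-!
Write `S k = ∑_{i<k} |x i|^p` and `P k = ∏_{i<k} (1 - |c i|^p)`. Everything rests on the identity
`P k = 1 - S k`, valid whenever `x` and `c` correspond to each other; it turns the factor in the
inverse map into the denominator of the canonical map, so that the two cancel.
It comes from the telescoping expansion `∏_{i<k} (1 - f i) = 1 - ∑_{i<k} f i * ∏_{j<i} (1 - f j)`
(`Finset.prod_one_sub_ordered`) with `f i = |c i|^p`: if `x = canonInvMap c`, then the summands are
`|x i|^p` by definition, while if `c = canonMap x`, then they are `|x i|^p / (1 - S i) * P i`,
which is `|x i|^p` by strong induction. The same expansion over all indices shows that the inverse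
map lands in the ball.
-/

open MeasureTheory Filter Set
open scoped ENNReal Topology

noncomputable section

/-- The open unit ball of the `ℓ^p` norm in `ℝ^N`. -/
def pBall (N : ℕ) (p : ℝ) : Set (Fin N → ℝ) := {x | ∑ i, |x i| ^ p < 1}

/-- The canonical coordinate map `𝒞_N` on the `ℓ^p` ball:
`c_k = x_k / (1 - ∑_{i<k} |x_i|^p)^{1/p}`. -/
def canonMap (p : ℝ) (N : ℕ) (x : Fin N → ℝ) : Fin N → ℝ :=
  fun k => x k / (1 - ∑ i ∈ Finset.Iio k, |x i| ^ p) ^ (1 / p)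

/-- The inverse canonical coordinate map:
`x_k = c_k · (∏_{i<k} (1 - |c_i|^p))^{1/p}`. -/
def canonInvMap (p : ℝ) (N : ℕ) (c : Fin N → ℝ) : Fin N → ℝ :=
  fun k => c k * (∏ i ∈ Finset.Iio k, (1 - |c i| ^ p)) ^ (1 / p)

theorem prod_Iio_one_sub {N : ℕ} (f : Fin N → ℝ) (k : Fin N) :
    ∏ i ∈ Finset.Iio k, (1 - f i) =
      1 - ∑ i ∈ Finset.Iio k, f i * ∏ j ∈ Finset.Iio i, (1 - f j) := by
  rw [Finset.prod_one_sub_ordered]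
  congr 1
  refine Finset.sum_congr rfl fun i hi => ?_
  congr 2
  ext j
  simp only [Finset.mem_filter, Finset.mem_Iio] at hi ⊢
  exact ⟨fun h => h.2, fun h => ⟨h.trans hi, h⟩⟩

theorem prod_univ_one_sub {N : ℕ} (f : Fin N → ℝ) :
    ∏ i, (1 - f i) = 1 - ∑ i, f i * ∏ j ∈ Finset.Iio i, (1 - f j) := by
  rw [Finset.prod_one_sub_ordered]
  congr 1
  refine Finset.sum_congr rfl fun i _ => ?_
  congr 2
  ext j
  simp

theorem one_sub_abs_rpow_pos {p t : ℝ} (hp : 1 ≤ p) (ht : t ∈ Set.Ioo (-1 : ℝ) 1) :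
    0 < 1 - |t| ^ p :=
  sub_pos.2 (Real.rpow_lt_one (abs_nonneg t) (abs_lt.2 ht) (by linarith))

theorem sum_Iio_add_lt_one {N : ℕ} {p : ℝ} {x : Fin N → ℝ} (hx : x ∈ pBall N p) (k : Fin N) :
    ∑ i ∈ Finset.Iio k, |x i| ^ p + |x k| ^ p < 1 := by
  have hx' : ∑ i, |x i| ^ p < 1 := hx
  rw [add_comm, ← Finset.sum_insert (f := fun i => |x i| ^ p) (by simp)]
  exact (Finset.sum_le_univ_sum_of_nonneg fun i => by positivity).trans_lt hx'

theorem one_sub_sum_Iio_pos {N : ℕ} {p : ℝ} {x : Fin N → ℝ} (hx : x ∈ pBall N p) (k : Fin N) :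
    0 < 1 - ∑ i ∈ Finset.Iio k, |x i| ^ p := by
  have h1 := sum_Iio_add_lt_one hx k
  have h2 : 0 ≤ |x k| ^ p := by positivity
  linarith

theorem abs_canonMap_rpow {N : ℕ} {p : ℝ} (hp : 1 ≤ p) {x : Fin N → ℝ} (hx : x ∈ pBall N p)
    (k : Fin N) :
    |canonMap p N x k| ^ p = |x k| ^ p / (1 - ∑ i ∈ Finset.Iio k, |x i| ^ p) := by
  have h0 := one_sub_sum_Iio_pos hx k
  have hr : 0 ≤ (1 - ∑ i ∈ Finset.Iio k, |x i| ^ p) ^ (1 / p) := Real.rpow_nonneg h0.le _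
  rw [canonMap, abs_div, abs_of_nonneg hr, Real.div_rpow (abs_nonneg _) hr, one_div,
    Real.rpow_inv_rpow h0.le (by linarith)]

/-- Strong induction on `k`: the induction hypothesis is what makes the denominator
`1 - ∑_{j<i} |x j|^p` in `|c i|^p` cancel against `∏_{j<i} (1 - |c j|^p)` in the expansion. -/
theorem prod_Iio_canonMap {N : ℕ} {p : ℝ} (hp : 1 ≤ p) {x : Fin N → ℝ} (hx : x ∈ pBall N p)
    (k : Fin N) :
    ∏ i ∈ Finset.Iio k, (1 - |canonMap p N x i| ^ p) =
      1 - ∑ i ∈ Finset.Iio k, |x i| ^ p := by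
  induction k using WellFoundedLT.induction with
  | ind k ih =>
    rw [prod_Iio_one_sub (fun i => |canonMap p N x i| ^ p)]
    congr 1
    refine Finset.sum_congr rfl fun i hi => ?_
    rw [ih i (Finset.mem_Iio.1 hi), abs_canonMap_rpow hp hx,
      div_mul_cancel₀ _ (one_sub_sum_Iio_pos hx i).ne']

theorem canonMap_mem_cube {N : ℕ} {p : ℝ} (hp : 1 ≤ p) {x : Fin N → ℝ} (hx : x ∈ pBall N p)
    (k : Fin N) : canonMap p N x k ∈ Set.Ioo (-1 : ℝ) 1 := by
  have h : |canonMap p N x k| ^ p < 1 := by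
    rw [abs_canonMap_rpow hp hx, div_lt_one (one_sub_sum_Iio_pos hx k)]
    linarith [sum_Iio_add_lt_one hx k]
  refine abs_lt.1 (lt_of_not_ge fun h1 => h.not_ge ?_)
  exact Real.one_le_rpow h1 (by linarith)

theorem prod_Iio_pos {N : ℕ} {p : ℝ} (hp : 1 ≤ p) {c : Fin N → ℝ}
    (hc : ∀ i, c i ∈ Set.Ioo (-1 : ℝ) 1) (k : Fin N) :
    0 < ∏ i ∈ Finset.Iio k, (1 - |c i| ^ p) :=
  Finset.prod_pos fun i _ => one_sub_abs_rpow_pos hp (hc i)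

theorem abs_canonInvMap_rpow {N : ℕ} {p : ℝ} (hp : 1 ≤ p) {c : Fin N → ℝ}
    (hc : ∀ i, c i ∈ Set.Ioo (-1 : ℝ) 1) (k : Fin N) :
    |canonInvMap p N c k| ^ p = |c k| ^ p * ∏ i ∈ Finset.Iio k, (1 - |c i| ^ p) := by
  have h0 := prod_Iio_pos hp hc k
  have hr : 0 ≤ (∏ i ∈ Finset.Iio k, (1 - |c i| ^ p)) ^ (1 / p) := Real.rpow_nonneg h0.le _
  rw [canonInvMap, abs_mul, abs_of_nonneg hr, Real.mul_rpow (abs_nonneg _) hr, one_div,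
    Real.rpow_inv_rpow h0.le (by linarith)]

theorem one_sub_sum_Iio_canonInvMap {N : ℕ} {p : ℝ} (hp : 1 ≤ p) {c : Fin N → ℝ}
    (hc : ∀ i, c i ∈ Set.Ioo (-1 : ℝ) 1) (k : Fin N) :
    1 - ∑ i ∈ Finset.Iio k, |canonInvMap p N c i| ^ p =
      ∏ i ∈ Finset.Iio k, (1 - |c i| ^ p) := by
  simp only [abs_canonInvMap_rpow hp hc]
  exact (prod_Iio_one_sub (fun i => |c i| ^ p) k).symm

theorem canonInvMap_mem_pBall {N : ℕ} {p : ℝ} (hp : 1 ≤ p) {c : Fin N → ℝ}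
    (hc : ∀ i, c i ∈ Set.Ioo (-1 : ℝ) 1) : canonInvMap p N c ∈ pBall N p := by
  change ∑ i, |canonInvMap p N c i| ^ p < 1
  simp only [abs_canonInvMap_rpow hp hc]
  have h1 := prod_univ_one_sub (fun i => |c i| ^ p)
  have h2 : 0 < ∏ i, (1 - |c i| ^ p) :=
    Finset.prod_pos fun i _ => one_sub_abs_rpow_pos hp (hc i)
  linarith

theorem statement0 (N : ℕ) (hN : 1 ≤ N) (p : ℝ) (hp : 1 ≤ p) :
    Set.BijOn (canonMap p N) (pBall N p) (Set.univ.pi fun _ : Fin N => Set.Ioo (-1 : ℝ) 1) ∧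
    Set.InvOn (canonInvMap p N) (canonMap p N) (pBall N p)
      (Set.univ.pi fun _ : Fin N => Set.Ioo (-1 : ℝ) 1) := by
  have hinv : Set.InvOn (canonInvMap p N) (canonMap p N) (pBall N p)
      (Set.univ.pi fun _ : Fin N => Set.Ioo (-1 : ℝ) 1) := by
    constructor
    · intro x hx
      ext k
      rw [canonInvMap, prod_Iio_canonMap hp hx, canonMap,
        div_mul_cancel₀ _ (Real.rpow_pos_of_pos (one_sub_sum_Iio_pos hx k) _).ne']
    · intro c hc
      have hc' : ∀ i, c i ∈ Set.Ioo (-1 : ℝ) 1 := fun i => hc i (Set.mem_univ i)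
      ext k
      rw [canonMap, one_sub_sum_Iio_canonInvMap hp hc', canonInvMap,
        mul_div_cancel_right₀ _ (Real.rpow_pos_of_pos (prod_Iio_pos hp hc' k) _).ne']
  refine ⟨hinv.bijOn (fun x hx k _ => canonMap_mem_cube hp hx k) ?_, hinv⟩
  exact fun c hc => canonInvMap_mem_pBall hp fun i => hc i (Set.mem_univ i)

end
end

section
/- Let N ≥ 1, 1 ≤ p < ∞, and let X = (X_1, …, X_N) be uniformly distributed on 𝔹_{N,p}. Then the pushforward of the law of X under the map x ↦ (|x_1|^p, …, |x_N|^p) is the Dirichlet distribution Dir_N(1/p, …, 1/p; 1) on the open simplex 𝒮_N^<, i.e. the measure on 𝒮_N^< with density Γ(N/p + 1)/Γ(1/p)^N · ∏_{j=1}^N x_j^{1/p - 1} with respect to Lebesgue measure; moreover, conditionally on (|X_1|, …, |X_N|), the signs (sign(X_1), …, sign(X_N)) are independent Rademacher variables. -/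
/-!
Under Lebesgue measure on `ℝ`, the pair `(|x|^p, sign x)` is distributed as the product of the
infinite measure `Λ_p(dy) = (2/p) y^(1/p - 1) dy` on `(0, ∞)` and the Rademacher law
(`map_abs_rpow_sign`): this is the substitution `x = ± y^(1/p)` on each half-line. Since Lebesgue
measure on `ℝ^N` is a product measure, the vector of powers and the vector of signs have joint law
`Λ_p^N ⊗ Rademacher^N` (`map_pi_abs_rpow_sign`).

The ball is the event `∑ |x_i|^p < 1`, which involves the powers only. Conditioning on it therefore
leaves the Rademacher factor untouched and replaces `Λ_p^N` by its normalized restriction to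
`{∑ y_i < 1}`. That restriction has a density proportional to `∏ y_i^(1/p - 1)` on the simplex, and
the known volume of the `ℓ^p` ball gives the Dirichlet constant (`smul_restrict_eq_dirichletLt`).
The law of the powers alone is the first marginal.
-/


open MeasureTheory Filter Set
open scoped ENNReal Topology

noncomputable section

/-- The uniform (normalized Lebesgue) distribution on the `ℓ^p` ball. -/
def uniformBall (N : ℕ) (p : ℝ) : Measure (Fin N → ℝ) :=
  (volume (pBall N p))⁻¹ • volume.restrict (pBall N p)

/-- The open simplex `𝒮_N^< = {y : y_i > 0, ∑ y_i < 1}`. -/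
def simplexLt (N : ℕ) : Set (Fin N → ℝ) := {y | (∀ i, 0 < y i) ∧ ∑ i, y i < 1}

/-- The Dirichlet distribution `Dir_N(a_1,…,a_N; b)` on the open simplex `𝒮_N^<`,
given by its density with respect to Lebesgue measure. -/
def dirichletLt (N : ℕ) (a : Fin N → ℝ) (b : ℝ) : Measure (Fin N → ℝ) :=
  volume.withDensity ((simplexLt N).indicator fun y =>
    ENNReal.ofReal (Real.Gamma ((∑ i, a i) + b) / ((∏ i, Real.Gamma (a i)) * Real.Gamma b) *
      (∏ i, y i ^ (a i - 1)) * (1 - ∑ i, y i) ^ (b - 1)))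

/-- The Rademacher distribution on `ℝ`: `±1` with probability `1/2` each. -/
def rademacher : Measure ℝ :=
  (2 : ℝ≥0∞)⁻¹ • Measure.dirac (-1 : ℝ) + (2 : ℝ≥0∞)⁻¹ • Measure.dirac (1 : ℝ)

/-- The law `Λ_p(dy) = (2/p) y^(1/p - 1) dy` on `(0, ∞)` of `|x|^p` under Lebesgue measure on
`ℝ`. It is an infinite measure; its density is extended by `0` to all of `ℝ`. -/
def powDensity (p : ℝ) : ℝ → ℝ≥0∞ :=
  (Ioi 0).indicator fun y => ENNReal.ofReal (2 / p * y ^ (1 / p - 1))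

lemma measurable_powDensity (p : ℝ) : Measurable (powDensity p) := by
  unfold powDensity
  refine Measurable.indicator ?_ measurableSet_Ioi
  fun_prop

lemma powDensity_ne_top (p y : ℝ) : powDensity p y ≠ ∞ := by
  unfold powDensity
  by_cases h : y ∈ Ioi (0 : ℝ) <;> simp [h]

instance (p : ℝ) : SigmaFinite ((volume : Measure ℝ).withDensity (powDensity p)) :=
  SigmaFinite.withDensity_of_ne_top' (powDensity_ne_top p)

instance : IsProbabilityMeasure rademacher :=
  ⟨by simp [rademacher, ENNReal.inv_two_add_inv_two]⟩

lemma measurable_sign : Measurable Real.sign := by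
  unfold Real.sign
  exact Measurable.ite measurableSet_Iio measurable_const
    (Measurable.ite measurableSet_Ioi measurable_const measurable_const)

/-- Tonelli for a product of functions of one coordinate each. -/
lemma lintegral_pi_prod {n : ℕ} (μ : Fin n → Measure ℝ) [∀ i, SigmaFinite (μ i)]
    (f : ℝ → ℝ≥0∞) (hf : Measurable f) :
    ∫⁻ x, ∏ i, f (x i) ∂(Measure.pi μ) = ∏ i, ∫⁻ y, f y ∂(μ i) := by
  induction n with
  | zero => simp
  | succ n ih =>
    have h := (measurePreserving_piFinSuccAbove μ 0).symm
    rw [← h.lintegral_comp_emb (MeasurableEquiv.measurableEmbedding _)]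
    simp_rw [MeasurableEquiv.piFinSuccAbove_symm_apply, Fin.insertNthEquiv,
      Fin.prod_univ_succ, Fin.insertNth_zero]
    simp only [Equiv.coe_fn_mk, Fin.cons_zero, Fin.cons_succ, Fin.zero_succAbove, cast_eq]
    rw [lintegral_prod_mul (f := f) (g := fun x : Fin n → ℝ => ∏ i, f (x i)) hf.aemeasurable
      (Finset.measurable_prod _ fun i _ => hf.comp (measurable_pi_apply i)).aemeasurable, ih]

lemma pi_withDensity {n : ℕ} (f : ℝ → ℝ≥0∞) (hf : Measurable f)
    [SigmaFinite ((volume : Measure ℝ).withDensity f)] :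
    Measure.pi (fun _ : Fin n => (volume : Measure ℝ).withDensity f) =
      (volume : Measure (Fin n → ℝ)).withDensity fun x => ∏ i, f (x i) := by
  refine Measure.pi_eq fun s hs => ?_
  rw [withDensity_apply _ (MeasurableSet.univ_pi hs), volume_pi, Measure.restrict_pi_pi,
    lintegral_pi_prod _ f hf]
  exact Finset.prod_congr rfl fun i _ => (withDensity_apply _ (hs i)).symm

/-- The change of variables `x = y^(1/p)` on the positive half-line. -/
lemma lintegral_rpow_Ioi {p : ℝ} (hp : 0 < p) (f : ℝ → ℝ≥0∞) :
    ∫⁻ x in Ioi 0, f (x ^ p) =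
      ∫⁻ y in Ioi 0, ENNReal.ofReal (1 / p * y ^ (1 / p - 1)) * f y := by
  have him : (fun y : ℝ => y ^ (1 / p)) '' Ioi 0 = Ioi 0 := by
    ext x
    constructor
    · rintro ⟨y, hy, rfl⟩
      exact Real.rpow_pos_of_pos hy _
    · intro hx
      refine ⟨x ^ p, Real.rpow_pos_of_pos hx _, ?_⟩
      simp only [← Real.rpow_mul (le_of_lt hx)]
      rw [mul_one_div_cancel hp.ne', Real.rpow_one]
  have hinj : InjOn (fun y : ℝ => y ^ (1 / p)) (Ioi 0) := by
    refine (Real.rpow_left_injOn (one_div_pos.2 hp).ne').mono fun y hy => ?_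
    exact le_of_lt (mem_Ioi.1 hy)
  have h := lintegral_image_eq_lintegral_abs_deriv_mul (s := Ioi (0 : ℝ))
    (f := fun y : ℝ => y ^ (1 / p)) (f' := fun y => 1 / p * y ^ (1 / p - 1)) measurableSet_Ioi
    (fun y hy => (Real.hasDerivAt_rpow_const (Or.inl (ne_of_gt hy))).hasDerivWithinAt)
    hinj (fun x => f (x ^ p))
  rw [him] at h
  rw [h]
  refine setLIntegral_congr_fun measurableSet_Ioi fun y hy => ?_
  have hy0 : 0 < y := hy
  rw [abs_of_nonneg (by positivity), ← Real.rpow_mul hy0.le, one_div_mul_cancel hp.ne',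
    Real.rpow_one]

/-- Under Lebesgue measure on `ℝ`, the joint law of `|x|^p` and `sign x` is the product of `Λ_p` and
the Rademacher law. The two half-lines contribute equally, by the
reflection `x ↦ -x`. -/
lemma map_abs_rpow_sign {p : ℝ} (hp : 0 < p) :
    (volume : Measure ℝ).map (fun x => (|x| ^ p, Real.sign x)) =
      (volume.withDensity (powDensity p)).prod rademacher := by
  have hm : Measurable fun x : ℝ => (|x| ^ p, Real.sign x) :=
    Measurable.prodMk (by fun_prop) measurable_sign
  refine Measure.ext_of_lintegral _ fun f hf => ?_
  rw [lintegral_map hf hm, lintegral_prod_symm' _ hf]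
  have hsplit : ∫⁻ x : ℝ, f (|x| ^ p, Real.sign x) =
      (∫⁻ x in Ioi 0, f (x ^ p, -1)) + ∫⁻ x in Ioi 0, f (x ^ p, 1) := by
    rw [← lintegral_add_compl _ (measurableSet_Iio (a := (0 : ℝ))), compl_Iio,
      setLIntegral_congr Ioi_ae_eq_Ici.symm]
    congr 1
    · have := (Measure.measurePreserving_neg (volume : Measure ℝ)).setLIntegral_comp_preimage_emb
        (MeasurableEquiv.neg ℝ).measurableEmbedding
        (fun x => f (|x| ^ p, Real.sign x)) (Iio 0)
      rw [← this]
      have hpre : (Neg.neg ⁻¹' Iio (0 : ℝ)) = Ioi 0 := by ext; simp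
      rw [hpre]
      refine setLIntegral_congr_fun measurableSet_Ioi fun x hx => ?_
      have hx : 0 < x := hx
      simp only [abs_neg, abs_of_pos hx, Real.sign_neg, Real.sign_of_pos hx]
    · refine setLIntegral_congr_fun measurableSet_Ioi fun x hx => ?_
      have hx : 0 < x := hx
      simp only [abs_of_pos hx, Real.sign_of_pos hx]
  have hdens : ∀ s : ℝ, ∫⁻ y, f (y, s) ∂(volume.withDensity (powDensity p)) =
      2 * ∫⁻ x in Ioi 0, f (x ^ p, s) := by
    intro s
    have hfs : Measurable fun y => f (y, s) := hf.comp (by fun_prop)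
    rw [lintegral_withDensity_eq_lintegral_mul _ (measurable_powDensity p) hfs,
      lintegral_rpow_Ioi hp (fun y => f (y, s)), ← lintegral_const_mul _ (by fun_prop),
      ← lintegral_indicator measurableSet_Ioi]
    congr 1 with y
    by_cases hy : y ∈ Ioi (0 : ℝ)
    · simp only [Pi.mul_apply, powDensity, indicator_of_mem hy, ← mul_assoc]
      rw [show (2 : ℝ≥0∞) = ENNReal.ofReal 2 by simp, ← ENNReal.ofReal_mul (by norm_num)]
      ring_nf
    · simp [powDensity, indicator_of_notMem hy]
  simp only [hdens]
  rw [hsplit, rademacher, lintegral_add_measure, lintegral_smul_measure, lintegral_smul_measure,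
    lintegral_dirac, lintegral_dirac]
  simp only [smul_eq_mul, ← mul_assoc, ENNReal.inv_mul_cancel two_ne_zero ENNReal.ofNat_ne_top,
    one_mul]

/-- The `N`-dimensional version of `map_abs_rpow_sign`, by taking the product over coordinates and
regrouping `(ℝ × ℝ)^N` as `ℝ^N × ℝ^N`. -/
lemma map_pi_abs_rpow_sign (N : ℕ) {p : ℝ} (hp : 0 < p) :
    (volume : Measure (Fin N → ℝ)).map
        (fun x => (fun i => |x i| ^ p, fun i => Real.sign (x i))) =
      (Measure.pi fun _ : Fin N => volume.withDensity (powDensity p)).prod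
        (Measure.pi fun _ : Fin N => rademacher) := by
  have hm : Measurable fun x : ℝ => (|x| ^ p, Real.sign x) :=
    Measurable.prodMk (by fun_prop) measurable_sign
  have : SigmaFinite ((volume : Measure ℝ).map fun x => (|x| ^ p, Real.sign x)) := by
    rw [map_abs_rpow_sign hp]; infer_instance
  have h1 := Measure.pi_map_pi (μ := fun _ : Fin N => (volume : Measure ℝ))
    (f := fun _ x => (|x| ^ p, Real.sign x)) fun _ => hm.aemeasurable
  simp only [map_abs_rpow_sign hp] at h1
  have hmN : Measurable fun (x : Fin N → ℝ) i => (|x i| ^ p, Real.sign (x i)) :=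
    measurable_pi_lambda _ fun i => hm.comp (measurable_pi_apply i)
  rw [← (measurePreserving_arrowProdEquivProdArrow ℝ ℝ (Fin N)
    (fun _ => volume.withDensity (powDensity p)) (fun _ => rademacher)).map_eq, ← h1,
    Measure.map_map (MeasurableEquiv.measurable _) hmN]
  rfl

/-- The Dirichlet law is `Λ_p^N` conditioned on `∑ y_i < 1`. The normalizing constants agree
because the volume of the ball is `(2 Γ(1/p + 1))^N / Γ(N/p + 1)` and `Γ(1/p + 1) = Γ(1/p) / p`. -/
lemma smul_restrict_eq_dirichletLt (N : ℕ) {p : ℝ} (hp : 1 ≤ p) :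
    (volume (pBall N p))⁻¹ • (Measure.pi fun _ : Fin N => volume.withDensity (powDensity p)).restrict
        {y | ∑ i, y i < 1} = dirichletLt N (fun _ => 1 / p) 1 := by
  have hp0 : 0 < p := by linarith
  have hS : MeasurableSet {y : Fin N → ℝ | ∑ i, y i < 1} :=
    measurableSet_lt (by fun_prop) measurable_const
  have hmeas : Measurable fun x : Fin N → ℝ => ∏ i, powDensity p (x i) :=
    Finset.measurable_prod _ fun i _ => (measurable_powDensity p).comp (measurable_pi_apply i)
  have hvol : volume (pBall N p) =
      ENNReal.ofReal ((2 * Real.Gamma (1 / p + 1)) ^ N / Real.Gamma (N / p + 1)) := by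
    simpa [pBall] using volume_sum_rpow_lt_one (Fin N) hp
  have hG : 0 < Real.Gamma (1 / p) := Real.Gamma_pos_of_pos (by positivity)
  have hGN : 0 < Real.Gamma (N / p + 1) := Real.Gamma_pos_of_pos (by positivity)
  have hG1 : Real.Gamma (1 / p + 1) = 1 / p * Real.Gamma (1 / p) :=
    Real.Gamma_add_one (by positivity)
  rw [pi_withDensity _ (measurable_powDensity p), restrict_withDensity hS,
    ← withDensity_indicator hS, ← withDensity_smul _ (hmeas.indicator hS), dirichletLt]
  congr 1 with y
  rw [Pi.smul_apply, smul_eq_mul]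
  by_cases hsum : y ∈ {y : Fin N → ℝ | ∑ i, y i < 1}
  · rw [indicator_of_mem hsum]
    by_cases hpos : ∀ i, 0 < y i
    · have hy : y ∈ simplexLt N := ⟨hpos, hsum⟩
      have hd : ∀ i, powDensity p (y i) = ENNReal.ofReal (2 / p * y i ^ (1 / p - 1)) :=
        fun i => indicator_of_mem (hpos i) _
      simp only [indicator_of_mem hy, hd]
      have hyp : ∀ i, 0 < y i ^ (1 / p - 1) := fun i => Real.rpow_pos_of_pos (hpos i) _
      rw [← ENNReal.ofReal_prod_of_nonneg fun i _ => by have := hyp i; positivity, hvol, hG1,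
        ← ENNReal.ofReal_inv_of_pos (by positivity), ← ENNReal.ofReal_mul (by positivity)]
      congr 1
      simp only [Finset.prod_mul_distrib, Finset.prod_const, Finset.sum_const, Finset.card_univ,
        Fintype.card_fin, nsmul_eq_mul, Real.Gamma_one, sub_self, Real.rpow_zero, mul_one,
        mul_one_div]
      field_simp
      rw [div_pow, div_pow, mul_pow]
      ring
    · have hy : y ∉ simplexLt N := fun h => hpos h.1
      push Not at hpos
      obtain ⟨i, hi⟩ := hpos
      rw [indicator_of_notMem hy, Finset.prod_eq_zero (Finset.mem_univ i), mul_zero]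
      exact indicator_of_notMem (by simpa using hi) _
  · have hy : y ∉ simplexLt N := fun h => hsum h.2
    rw [indicator_of_notMem hsum, indicator_of_notMem hy, mul_zero]

theorem statement3 (N : ℕ) (hN : 1 ≤ N) (p : ℝ) (hp : 1 ≤ p) :
    -- the pushforward of the uniform law on the ball by `x ↦ (|x_i|^p)_i` is
    -- the Dirichlet distribution `Dir_N(1/p,…,1/p; 1)` on `𝒮_N^<`
    (uniformBall N p).map (fun x => fun i => |x i| ^ p) =
      dirichletLt N (fun _ => 1 / p) 1 ∧
    -- moreover the moduli and the signs are jointly distributed as the product of this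
    -- Dirichlet law and independent Rademacher signs, i.e. conditionally on
    -- `(|X_1|,…,|X_N|)` the signs are independent Rademacher variables
    (uniformBall N p).map (fun x => (fun i => |x i| ^ p, fun i => Real.sign (x i))) =
      (dirichletLt N (fun _ => 1 / p) 1).prod (Measure.pi fun _ : Fin N => rademacher) := by
  have hp0 : 0 < p := by linarith
  have hS : MeasurableSet {y : Fin N → ℝ | ∑ i, y i < 1} :=
    measurableSet_lt (by fun_prop) measurable_const
  have hm1 : Measurable fun x : Fin N → ℝ => fun i => |x i| ^ p := by fun_prop
  have hm : Measurable fun x : Fin N → ℝ => (fun i => |x i| ^ p, fun i => Real.sign (x i)) :=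
    hm1.prodMk (measurable_pi_lambda _ fun i => measurable_sign.comp (measurable_pi_apply i))
  have hjoint : (uniformBall N p).map
      (fun x => (fun i => |x i| ^ p, fun i => Real.sign (x i))) =
      (dirichletLt N (fun _ => 1 / p) 1).prod (Measure.pi fun _ : Fin N => rademacher) := by
    -- The ball is the preimage of `{∑ y_i < 1} × ℝ^N`, so restricting commutes with pushing
    -- forward.
    have hpre : pBall N p = (fun x : Fin N → ℝ => (fun i => |x i| ^ p, fun i => Real.sign (x i))) ⁻¹'
        ({y : Fin N → ℝ | ∑ i, y i < 1} ×ˢ (univ : Set (Fin N → ℝ))) := by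
      ext x
      simp [pBall]
    rw [uniformBall, Measure.map_smul, ← smul_restrict_eq_dirichletLt N hp,
      Measure.prod_smul_left]
    congr 1
    rw [hpre, ← Measure.restrict_map hm (hS.prod MeasurableSet.univ), map_pi_abs_rpow_sign N hp0,
      ← Measure.prod_restrict, Measure.restrict_univ]
  refine ⟨?_, hjoint⟩
  have h := congrArg (Measure.map Prod.fst) hjoint
  rw [Measure.map_map measurable_fst hm, Measure.map_fst_prod, measure_univ, one_smul] at h
  exact h

end
end

section
/- (Chang–Kemperman–Studden) Let N ≥ 1 and endow the moment space M_N^{[0,1]} = {(∫_0^1 t dμ, …, ∫_0^1 t^N dμ) : μ a probability measure on [0,1]} ⊂ ℝ^N with the uniform (normalized Lebesgue) distribution. Then the random canonical moments C_1, …, C_N are independent, and for each j = 1, …, N, C_j has the Beta(N-j+1, N-j+1) distribution, i.e. density ((2N-2j+1)!)/((N-j)!)^2 · x^{N-j}(1-x)^{N-j} 1_{(0,1)}(x). -/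
/-!
The proof parametrizes the moment space explicitly by the cube. Let `t = x²`. Given parameters
`c_0, c_1, …`, a Szegő-type recursion (`QR`) produces polynomials `Q_k, R_k` such that
`a_k = Q_k²` and `b_k = (1 - x²) R_k²` are polynomials in `t`, nonnegative on `[0, 1]`, with
leading terms `t^(k+1)` and `-t^(k+1)`, and
`a_{k+1} + b_{k+1} = (1 - c_k)² a_k + c_k² b_k`.
If `∫ a_i = c_i ∏_{j<i} c_j (1 - c_j)` for all `i < k`, this identity gives
`∫ (a_k + b_k) = ∏_{j<k} c_j (1 - c_j)` (`integral_spread`). As `∫ a_k` and `∫ b_k` are nonnegative,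
every measure on `[0, 1]` therefore has parameters in `[0, 1]` (`exists_param`), and the prescribed
values of `∫ a_k` determine the moments recursively, affinely in `c_k` with slope
`∏_{j<k} c_j (1 - c_j)` (`mom_sub`).

Conversely, every parameter vector in the cube comes from a measure (`exists_measure`): take the
Jacobi matrix with off-diagonal entries `√(c_k (1 - c_{k-1}))`. Its eigenvalues lie in `[-1, 1]`, the
components of its eigenvectors are values of the `Q_k`, and its spectral measure at the first basis
vector, pushed forward by `x ↦ x²`, has the required integrals because the rows of an orthogonal
matrix are unit vectors.

Hence the moment space is the image of the cube under `momMap` (`momentSpace_eq`), whose inverse on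
the open cube is `canMom` (`canMom_momMap`). The map is triangular with Jacobian
`∏_k ∏_{j<k} c_j (1 - c_j) = ∏_j (c_j (1 - c_j))^(N-1-j)` (0-based `j`), and the change of variables
formula gives the product of Beta densities up to a constant, which is fixed by total mass.
-/

open MeasureTheory Filter Set
open scoped ENNReal Topology

noncomputable section

/-- The `n`-th moment space: vectors of the first `n` power moments of probability
measures on `[0,1]`. -/
def momentSpace (n : ℕ) : Set (Fin n → ℝ) :=
  {m | ∃ μ : Measure ℝ, IsProbabilityMeasure μ ∧ μ (Set.Icc (0 : ℝ) 1)ᶜ = 0 ∧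
      ∀ j : Fin n, m j = ∫ t, t ^ ((j : ℕ) + 1) ∂μ}

/-- The set of admissible values `r` for the `(k+1)`-st moment given the first `k`
moments `m_1, …, m_k` (0-based: `m 0, …, m ⟨k-1⟩`). -/
def extSet (N : ℕ) (m : Fin N → ℝ) (k : Fin N) : Set ℝ :=
  {r | (fun i : Fin ((k : ℕ) + 1) =>
      if h : (i : ℕ) < (k : ℕ) then m ⟨i, h.trans k.isLt⟩ else r) ∈
    momentSpace ((k : ℕ) + 1)}

/-- The canonical moments: `c_{k+1} = (m_{k+1} - c^-_{k+1})/(c^+_{k+1} - c^-_{k+1})`,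
where `c^±_{k+1}` are the extreme admissible values of the `(k+1)`-st moment given
the previous ones. -/
def canMom (N : ℕ) (m : Fin N → ℝ) (k : Fin N) : ℝ :=
  (m k - sInf (extSet N m k)) / (sSup (extSet N m k) - sInf (extSet N m k))

/-- The uniform (normalized Lebesgue) distribution on the moment space. -/
def uniformMomentSpace (N : ℕ) : Measure (Fin N → ℝ) :=
  (volume (momentSpace N))⁻¹ • volume.restrict (momentSpace N)

/-- The Beta(a,b) distribution on (0,1), given by its density. -/
def betaMeasure (a b : ℝ) : Measure ℝ :=
  volume.withDensity ((Set.Ioo (0 : ℝ) 1).indicator fun x =>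
    ENNReal.ofReal (Real.Gamma (a + b) / (Real.Gamma a * Real.Gamma b) *
      x ^ (a - 1) * (1 - x) ^ (b - 1)))

/-! ### The polynomials attached to a sequence of canonical moments -/

open Polynomial in
/-- The polynomials `(a_k, b_k, d_k)` in `t = x²` that represent
`(Q_k(x)², (1 - x²) R_k(x)², x Q_k(x) R_k(x))` for the pair `(Q_k, R_k)` of `QR`.
The indices start at `0`, so `a_k` and `b_k` have degree `k + 1`; they depend only on the
parameters `c 0, …, c (k - 1)`. -/
def tri (c : ℕ → ℝ) : ℕ → ℝ[X] × ℝ[X] × ℝ[X]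
  | 0 => (X, 1 - X, X)
  | k + 1 =>
    let a := (tri c k).1
    let b := (tri c k).2.1
    let d := (tri c k).2.2
    (C ((1 - c k) ^ 2) * (X * a) + C (c k ^ 2) * (b - X * b) - C (2 * c k * (1 - c k)) * (d - X * d),
     C ((1 - c k) ^ 2) * (a - X * a) + C (c k ^ 2) * (X * b) + C (2 * c k * (1 - c k)) * (d - X * d),
     C ((1 - c k) ^ 2) * (X * a) - C (c k ^ 2) * (X * b)
       + C (c k * (1 - c k)) * (X * d - (d - X * d)))

/-- The pair `(Q_k, R_k)` at the point `x`. For the measure with canonical moments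
`c 0, c 1, …`, transported to a symmetric measure `ν` on `[-1, 1]` by `t = x²`, these are the monic
orthogonal polynomials of degree `k + 1` for `ν` and of degree `k` for `(1 - x²) ν`; the recursion
is the analogue of the Szegő recursion. -/
def QR (c : ℕ → ℝ) (x : ℝ) : ℕ → ℝ × ℝ
  | 0 => (x, 1)
  | k + 1 => (x * (1 - c k) * (QR c x k).1 - c k * (1 - x ^ 2) * (QR c x k).2,
      (1 - c k) * (QR c x k).1 + c k * x * (QR c x k).2)

/-- The product `∏_{i<k} c_i (1 - c_i)`, which is the length of the interval of admissible
values of the moment of order `k + 1` once the earlier ones are fixed. -/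
def spread (c : ℕ → ℝ) (k : ℕ) : ℝ := ∏ i ∈ Finset.range k, c i * (1 - c i)

lemma tri_eval (c : ℕ → ℝ) (x : ℝ) (k : ℕ) :
    (tri c k).1.eval (x ^ 2) = (QR c x k).1 ^ 2 ∧
    (tri c k).2.1.eval (x ^ 2) = (1 - x ^ 2) * (QR c x k).2 ^ 2 ∧
    (tri c k).2.2.eval (x ^ 2) = x * (QR c x k).1 * (QR c x k).2 := by
  induction k with
  | zero => simp [tri, QR]; ring
  | succ k ih =>
    obtain ⟨h1, h2, h3⟩ := ih
    simp only [tri, QR, Polynomial.eval_add, Polynomial.eval_sub, Polynomial.eval_mul,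
      Polynomial.eval_C, Polynomial.eval_X, h1, h2, h3]
    refine ⟨?_, ?_, ?_⟩ <;> ring

lemma tri_congr {c c' : ℕ → ℝ} {k : ℕ} (h : ∀ i < k, c i = c' i) : tri c k = tri c' k := by
  induction k with
  | zero => rfl
  | succ k ih =>
    simp only [tri, ih fun i hi => h i (hi.trans k.lt_succ_self), h k k.lt_succ_self]

lemma spread_congr {c c' : ℕ → ℝ} {k : ℕ} (h : ∀ i < k, c i = c' i) :
    spread c k = spread c' k :=
  Finset.prod_congr rfl fun i hi => by rw [h i (Finset.mem_range.1 hi)]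

lemma spread_nonneg {c : ℕ → ℝ} (h : ∀ i, c i ∈ Icc (0 : ℝ) 1) (k : ℕ) : 0 ≤ spread c k :=
  Finset.prod_nonneg fun i _ => mul_nonneg (h i).1 (by linarith [(h i).2])

lemma spread_pos {c : ℕ → ℝ} {k : ℕ} (h : ∀ i < k, c i ∈ Ioo (0 : ℝ) 1) : 0 < spread c k :=
  Finset.prod_pos fun i hi =>
    mul_pos (h i (Finset.mem_range.1 hi)).1 (by linarith [(h i (Finset.mem_range.1 hi)).2])

/-- No coefficient of `a_k`, `b_k`, `d_k` beyond degree `k + 1` survives. -/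
lemma tri_coeff_gt (c : ℕ → ℝ) (k j : ℕ) (hj : k + 1 < j) :
    (tri c k).1.coeff j = 0 ∧ (tri c k).2.1.coeff j = 0 ∧ (tri c k).2.2.coeff j = 0 := by
  induction k generalizing j with
  | zero =>
    obtain ⟨j, rfl⟩ : ∃ i, j = i + 2 := ⟨j - 2, by omega⟩
    simp [tri, Polynomial.coeff_X, Polynomial.coeff_one]
  | succ k ih =>
    obtain ⟨j, rfl⟩ : ∃ i, j = i + 1 := ⟨j - 1, by omega⟩
    obtain ⟨h1, h2, h3⟩ := ih j (by omega)
    obtain ⟨h4, h5, h6⟩ := ih (j + 1) (by omega)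
    simp only [tri, Polynomial.coeff_add, Polynomial.coeff_sub, Polynomial.coeff_C_mul,
      Polynomial.coeff_X_mul, h1, h2, h3, h4, h5, h6]
    refine ⟨?_, ?_, ?_⟩ <;> ring

lemma tri_coeff_top (c : ℕ → ℝ) (k : ℕ) :
    (tri c k).1.coeff (k + 1) = 1 ∧ (tri c k).2.1.coeff (k + 1) = -1 ∧
      (tri c k).2.2.coeff (k + 1) = 1 := by
  induction k with
  | zero => simp [tri, Polynomial.coeff_one]
  | succ k ih =>
    obtain ⟨h1, h2, h3⟩ := ih
    obtain ⟨h4, h5, h6⟩ := tri_coeff_gt c k (k + 2) (by omega)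
    simp only [tri, Polynomial.coeff_add, Polynomial.coeff_sub, Polynomial.coeff_C_mul,
      Polynomial.coeff_X_mul, h1, h2, h3, h4, h5, h6]
    refine ⟨?_, ?_, ?_⟩ <;> ring

lemma tri_eval_sum (c : ℕ → ℝ) (k : ℕ) (t : ℝ) :
    (tri c k).1.eval t = t ^ (k + 1) + ∑ j : Fin (k + 1), (tri c k).1.coeff j * t ^ (j : ℕ) := by
  have hd : (tri c k).1.natDegree < k + 2 := by
    rw [Nat.lt_succ_iff, Polynomial.natDegree_le_iff_coeff_eq_zero]
    exact fun j hj => (tri_coeff_gt c k j hj).1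
  rw [Polynomial.eval_eq_sum_range' hd, Finset.sum_range_succ, (tri_coeff_top c k).1,
    Finset.sum_range (n := k + 1)]
  ring

/-- The moment of order `k` as a function of the canonical moments: the value forced
recursively by `∫ a_k = c_k * spread c k`. -/
def mom (c : ℕ → ℝ) : ℕ → ℝ
  | 0 => 1
  | k + 1 => c k * spread c k - ∑ j : Fin (k + 1), (tri c k).1.coeff j * mom c j
  decreasing_by exact j.2

lemma mom_zero (c : ℕ → ℝ) : mom c 0 = 1 := by rw [mom]

lemma mom_succ (c : ℕ → ℝ) (k : ℕ) : mom c (k + 1) =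
    c k * spread c k - ∑ j : Fin (k + 1), (tri c k).1.coeff j * mom c j := by rw [mom]

lemma mom_congr {c c' : ℕ → ℝ} {k : ℕ} (h : ∀ i < k, c i = c' i) : mom c k = mom c' k := by
  induction k using Nat.strong_induction_on with
  | _ k ih =>
    cases k with
    | zero => rw [mom_zero, mom_zero]
    | succ k =>
      have hk : ∀ i < k, c i = c' i := fun i hi => h i (hi.trans k.lt_succ_self)
      rw [mom_succ, mom_succ, h k k.lt_succ_self, tri_congr hk, spread_congr hk]
      congr 1
      refine Finset.sum_congr rfl fun j _ => ?_
      rw [ih j j.2 fun i hi => h i (hi.trans j.2)]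

/-- `mom c (k + 1)` is affine in `c k`, with slope `spread c k`. -/
lemma mom_sub {c c' : ℕ → ℝ} {k : ℕ} (h : ∀ i < k, c i = c' i) :
    mom c' (k + 1) - mom c (k + 1) = (c' k - c k) * spread c k := by
  rw [mom_succ, mom_succ, tri_congr h, spread_congr h]
  have : ∑ j : Fin (k + 1), (tri c' k).1.coeff j * mom c j =
      ∑ j : Fin (k + 1), (tri c' k).1.coeff j * mom c' j :=
    Finset.sum_congr rfl fun j _ => by
      rw [mom_congr fun i hi => h i (lt_of_lt_of_le hi (Nat.lt_succ_iff.1 j.2))]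
  rw [this]; ring

/-- Interior parameters are determined by the moments. Interiority is only needed on one
side. -/
lemma mom_inj {c c' : ℕ → ℝ} {n : ℕ} (hc : ∀ i < n, c i ∈ Ioo (0 : ℝ) 1)
    (h : ∀ k < n, mom c (k + 1) = mom c' (k + 1)) : ∀ k < n, c k = c' k := by
  intro k
  induction k using Nat.strong_induction_on with
  | _ k ih =>
    intro hk
    have h1 := mom_sub fun i hi => ih i hi (hi.trans hk)
    rw [h k hk, sub_self, eq_comm, mul_eq_zero] at h1
    rcases h1 with h1 | h1
    · linarith
    · exact absurd h1 (spread_pos fun i hi => hc i (hi.trans hk)).ne'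

/-! ### Parameters of a measure -/

lemma integrable_of_continuous {μ : Measure ℝ} [IsProbabilityMeasure μ] (hμ : μ (Icc (0 : ℝ) 1)ᶜ = 0)
    {f : ℝ → ℝ} (hf : Continuous f) : Integrable f μ := by
  have : μ.restrict (Icc (0 : ℝ) 1) = μ := Measure.restrict_eq_self_of_ae_mem hμ
  rw [← this]
  exact hf.continuousOn.integrableOn_compact isCompact_Icc

/-- The first `n` moments of `μ` are those attached to `c` exactly when every `∫ a_k ∂μ` has
the prescribed value; this is a triangular change of coordinates since `a_k` is monic. -/
lemma moments_iff {μ : Measure ℝ} [IsProbabilityMeasure μ] (hμ : μ (Icc (0 : ℝ) 1)ᶜ = 0)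
    (c : ℕ → ℝ) (n : ℕ) :
    (∀ k < n, ∫ t, (tri c k).1.eval t ∂μ = c k * spread c k) ↔
      ∀ k < n, ∫ t, t ^ (k + 1) ∂μ = mom c (k + 1) := by
  have key : ∀ k, (∀ j < k, ∫ t, t ^ (j + 1) ∂μ = mom c (j + 1)) →
      ∫ t, (tri c k).1.eval t ∂μ - c k * spread c k = ∫ t, t ^ (k + 1) ∂μ - mom c (k + 1) := by
    intro k hk
    have hI : ∀ j : ℕ, Integrable (fun t : ℝ => t ^ j) μ := fun j =>
      integrable_of_continuous hμ (continuous_pow j)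
    have hS : Integrable (fun t : ℝ => ∑ j : Fin (k + 1), (tri c k).1.coeff j * t ^ (j : ℕ)) μ :=
      integrable_finsetSum _ fun j _ => (hI j).const_mul _
    simp_rw [tri_eval_sum]
    rw [integral_add (hI (k + 1)) hS,
      integral_finsetSum _ fun (j : Fin (k + 1)) _ => (hI j).const_mul _, mom_succ]
    have : ∀ j : Fin (k + 1), ∫ t, (tri c k).1.coeff j * t ^ (j : ℕ) ∂μ =
        (tri c k).1.coeff j * mom c j := by
      intro j
      rw [integral_const_mul]
      congr 1
      obtain ⟨j, hj⟩ := j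
      cases j with
      | zero => simp [mom_zero]
      | succ j => exact hk j (by omega)
    rw [Finset.sum_congr rfl fun j _ => this j]
    ring
  constructor <;> intro h k <;> induction k using Nat.strong_induction_on with
    | _ k ih =>
      intro hk
      first
      | have := key k fun j hj => ih j hj (hj.trans hk)
        have := h k hk
        linarith
      | have := key k fun j hj => h j (hj.trans hk)
        have := h k hk
        linarith

/-- The range identity: `∫ (a_n + b_n) ∂μ = spread c n`. It follows from
`a_{k+1} + b_{k+1} = (1 - c_k)² a_k + c_k² b_k`. -/
lemma integral_spread {μ : Measure ℝ} [IsProbabilityMeasure μ] (hμ : μ (Icc (0 : ℝ) 1)ᶜ = 0)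
    (c : ℕ → ℝ) (n : ℕ) (h : ∀ k < n, ∫ t, (tri c k).1.eval t ∂μ = c k * spread c k) :
    ∫ t, (tri c n).1.eval t ∂μ + ∫ t, (tri c n).2.1.eval t ∂μ = spread c n := by
  have hI : ∀ p : Polynomial ℝ, Integrable (fun t : ℝ => p.eval t) μ := fun p =>
    integrable_of_continuous hμ p.continuous
  induction n with
  | zero =>
    rw [← integral_add (hI _) (hI _)]
    simp [tri, spread]
  | succ n ih =>
    have h1 := ih fun k hk => h k (hk.trans n.lt_succ_self)
    have h2 := h n n.lt_succ_self
    rw [h2] at h1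
    have h3 : ∀ t : ℝ, (tri c (n + 1)).1.eval t + (tri c (n + 1)).2.1.eval t =
        (1 - c n) ^ 2 * (tri c n).1.eval t + c n ^ 2 * (tri c n).2.1.eval t := by
      intro t
      simp only [tri, Polynomial.eval_add, Polynomial.eval_sub, Polynomial.eval_mul,
        Polynomial.eval_C, Polynomial.eval_X]
      ring
    rw [← integral_add (hI _) (hI _)]
    simp_rw [h3]
    rw [integral_add ((hI _).const_mul _) ((hI _).const_mul _), integral_const_mul,
      integral_const_mul, h2, show ∫ t, (tri c n).2.1.eval t ∂μ = spread c n - c n * spread c n by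
        linarith, spread, spread, Finset.prod_range_succ]
    ring

lemma tri_integral_nonneg {μ : Measure ℝ} (hμ : μ (Icc (0 : ℝ) 1)ᶜ = 0) (c : ℕ → ℝ) (k : ℕ) :
    0 ≤ ∫ t, (tri c k).1.eval t ∂μ ∧ 0 ≤ ∫ t, (tri c k).2.1.eval t ∂μ := by
  have h : ∀ᵐ t ∂μ, t ∈ Icc (0 : ℝ) 1 := hμ
  constructor <;> refine integral_nonneg_of_ae (h.mono fun t ht => ?_)
  · have := (tri_eval c (√t) k).1
    rw [Real.sq_sqrt ht.1] at this
    simpa only [Pi.zero_apply, this] using sq_nonneg _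
  · have := (tri_eval c (√t) k).2.1
    rw [Real.sq_sqrt ht.1] at this
    simpa only [Pi.zero_apply, this] using mul_nonneg (by linarith [ht.2]) (sq_nonneg _)

/-- Every probability measure on `[0, 1]` has parameters in `[0, 1]`. The positivity of
`∫ a_n` and `∫ b_n` and the range identity bound the next parameter. -/
lemma exists_param {μ : Measure ℝ} [IsProbabilityMeasure μ] (hμ : μ (Icc (0 : ℝ) 1)ᶜ = 0)
    (n : ℕ) : ∃ c : ℕ → ℝ, (∀ i, c i ∈ Icc (0 : ℝ) 1) ∧
      ∀ k < n, ∫ t, (tri c k).1.eval t ∂μ = c k * spread c k := by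
  induction n with
  | zero => exact ⟨0, fun i => by simp, by simp⟩
  | succ n ih =>
    obtain ⟨c, hc, h⟩ := ih
    have hs := integral_spread hμ c n h
    obtain ⟨ha, hb⟩ := tri_integral_nonneg hμ c n
    set A := ∫ t, (tri c n).1.eval t ∂μ with hA
    -- If `spread c n = 0` then `A = 0` and the junk value `A / 0 = 0` is the right choice.
    have hle : A ≤ spread c n := by linarith
    refine ⟨Function.update c n (A / spread c n), fun i => ?_, fun k hk => ?_⟩
    · rcases eq_or_ne i n with rfl | hi
      · rw [Function.update_self]
        exact ⟨div_nonneg ha (ha.trans hle), div_le_one_of_le₀ hle (ha.trans hle)⟩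
      · rw [Function.update_of_ne hi]; exact hc i
    · have hagree : ∀ i < k, Function.update c n (A / spread c n) i = c i := fun i hi =>
        Function.update_of_ne (by omega) _ _
      rw [tri_congr hagree, spread_congr hagree]
      rcases eq_or_ne k n with rfl | hkn
      · rw [Function.update_self, ← hA]
        rcases eq_or_ne (spread c k) 0 with h0 | h0
        · rw [h0]; linarith
        · rw [div_mul_cancel₀ _ h0]
      · rw [Function.update_of_ne hkn]; exact h k (by omega)

/-! ### Realization by Jacobi matrices -/

/-- `1 - c_{k-1}`, with the convention `c_{-1} = 0`. -/
def gap (c : ℕ → ℝ) : ℕ → ℝ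
  | 0 => 1
  | k + 1 => 1 - c k

lemma gap_nonneg {c : ℕ → ℝ} (h : ∀ i, c i ∈ Icc (0 : ℝ) 1) (k : ℕ) : 0 ≤ gap c k := by
  cases k with
  | zero => exact zero_le_one
  | succ k => exact sub_nonneg.2 (h k).2

lemma prod_gap (c : ℕ → ℝ) (k : ℕ) :
    ∏ i ∈ Finset.range (k + 1), c i * gap c i = c k * spread c k := by
  induction k with
  | zero => simp [gap, spread]
  | succ k ih =>
    rw [Finset.prod_range_succ, ih, spread, spread, Finset.prod_range_succ, gap]; ring

/-- The monic orthogonal polynomial of degree `k` (the shift of `Q` by one index) at `x`. -/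
def orthPoly (c : ℕ → ℝ) (x : ℝ) : ℕ → ℝ
  | 0 => 1
  | k + 1 => (QR c x k).1

lemma orthPoly_aux (c : ℕ → ℝ) (x : ℝ) (k : ℕ) :
    (1 - x ^ 2) * (QR c x k).2 + x * (QR c x k).1 = gap c k * orthPoly c x k := by
  cases k with
  | zero => simp [QR, gap, orthPoly]; ring
  | succ k => simp only [QR, gap, orthPoly]; ring

/-- The three-term recurrence, with the chain sequence `c_k (1 - c_{k-1})` as coefficients. -/
lemma orthPoly_rec (c : ℕ → ℝ) (x : ℝ) (k : ℕ) :
    orthPoly c x (k + 2) = x * orthPoly c x (k + 1) - c k * gap c k * orthPoly c x k := by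
  have := orthPoly_aux c x k
  rw [mul_assoc, ← this]
  simp only [orthPoly, QR]; ring

/-- The off-diagonal entries `√(c_k (1 - c_{k-1}))` of the Jacobi matrix. -/
def offDiag (c : ℕ → ℝ) (k : ℕ) : ℝ := √(c k * gap c k)

lemma offDiag_sq {c : ℕ → ℝ} (h : ∀ i, c i ∈ Icc (0 : ℝ) 1) (k : ℕ) :
    offDiag c k ^ 2 = c k * gap c k :=
  Real.sq_sqrt (mul_nonneg (h k).1 (gap_nonneg h k))

/-- An eigenvalue `x` of the Jacobi matrix satisfies `±x ≤ 1`. The eigenvector is encoded as a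
sequence vanishing at index `n + 1`. The sum `∑ (1 - ε x) V_k²` telescopes into the squares
`(√(1 - c_{k-1}) V_k - ε √c_k V_{k+1})²` and a boundary term. -/
lemma eig_le {c : ℕ → ℝ} (h : ∀ i, c i ∈ Icc (0 : ℝ) 1) {n : ℕ} {x ε : ℝ} (hε : ε ^ 2 = 1)
    {V : ℕ → ℝ} (h0 : x * V 0 = offDiag c 0 * V 1)
    (hV : ∀ k < n, x * V (k + 1) = offDiag c (k + 1) * V (k + 2) + offDiag c k * V k)
    (hend : V (n + 1) = 0) (hsum : ∑ k ∈ Finset.range (n + 1), V k ^ 2 = 1) : ε * x ≤ 1 := by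
  have key : ∀ m ≤ n, gap c m * V m ^ 2 - ε * offDiag c m * V m * V (m + 1) ≤
      ∑ k ∈ Finset.range (m + 1), (1 - ε * x) * V k ^ 2 := by
    intro m
    induction m with
    | zero =>
      intro _
      simp only [gap, zero_add, Finset.sum_range_one]
      linear_combination ε * V 0 * h0
    | succ m ih =>
      intro hm
      rw [Finset.sum_range_succ]
      have h1 := ih (by omega)
      have h2 := hV m (by omega)
      have h3 : 0 ≤ gap c m * V m ^ 2 - 2 * ε * offDiag c m * V m * V (m + 1)
          + c m * V (m + 1) ^ 2 := by
        have h4 : offDiag c m = √(c m) * √(gap c m) := Real.sqrt_mul (h m).1 _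
        have h5 := Real.sq_sqrt (h m).1
        have h6 := Real.sq_sqrt (gap_nonneg h m)
        have : gap c m * V m ^ 2 - 2 * ε * offDiag c m * V m * V (m + 1) + c m * V (m + 1) ^ 2 =
            (√(gap c m) * V m - ε * √(c m) * V (m + 1)) ^ 2 := by
          rw [h4]
          linear_combination (-V m ^ 2) * h6 - V (m + 1) ^ 2 * ε ^ 2 * h5
            - c m * V (m + 1) ^ 2 * hε
        rw [this]; exact sq_nonneg _
      have h7 : gap c (m + 1) = 1 - c m := rfl
      have h8 : (1 - ε * x) * V (m + 1) ^ 2 = V (m + 1) ^ 2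
          - ε * V (m + 1) * (offDiag c (m + 1) * V (m + 2) + offDiag c m * V m) := by
        rw [← h2]; ring
      rw [h7, h8]
      linarith
  have := key n le_rfl
  rw [hend, ← Finset.mul_sum, hsum] at this
  have := mul_nonneg (gap_nonneg h n) (sq_nonneg (V n))
  linarith

/-- The components of an eigenvector of the Jacobi matrix are the values of the (normalized)
orthogonal polynomials at the eigenvalue. The conclusion carries two consecutive indices because
the recurrence has three terms. -/
lemma eig_orthPoly {c : ℕ → ℝ} (h : ∀ i, c i ∈ Icc (0 : ℝ) 1) {n : ℕ} {x : ℝ}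
    {V : ℕ → ℝ} (h0 : x * V 0 = offDiag c 0 * V 1)
    (hV : ∀ k < n, x * V (k + 1) = offDiag c (k + 1) * V (k + 2) + offDiag c k * V k) :
    ∀ k ≤ n, orthPoly c x k * V 0 = (∏ i ∈ Finset.range k, offDiag c i) * V k ∧
      orthPoly c x (k + 1) * V 0 = (∏ i ∈ Finset.range (k + 1), offDiag c i) * V (k + 1) := by
  intro k
  induction k with
  | zero => intro _; simpa [orthPoly, QR] using h0
  | succ k ih =>
    intro hk
    obtain ⟨h1, h2⟩ := ih (by omega)
    refine ⟨h2, ?_⟩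
    rw [orthPoly_rec, ← offDiag_sq h, sub_mul, mul_assoc, h2, mul_assoc _ _ (V 0), h1]
    rw [Finset.prod_range_succ _ (k + 1), Finset.prod_range_succ _ k]
    linear_combination (∏ i ∈ Finset.range k, offDiag c i) * offDiag c k * hV k (by omega)

/-- The symmetric Jacobi matrix of size `n + 1` with zero diagonal and off-diagonal entries
`offDiag c k`. -/
def jacobi (c : ℕ → ℝ) (n : ℕ) : Matrix (Fin (n + 1)) (Fin (n + 1)) ℝ :=
  Matrix.of fun i j => (if (j : ℕ) = i + 1 then offDiag c i else 0) +
    (if (i : ℕ) = j + 1 then offDiag c j else 0)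

lemma jacobi_isHermitian (c : ℕ → ℝ) (n : ℕ) : (jacobi c n).IsHermitian := by
  ext i j
  simp [jacobi, add_comm]

/-- The extension of a finite vector to a sequence by zeros. -/
def extendZero (n : ℕ) (v : Fin n → ℝ) (k : ℕ) : ℝ := if h : k < n then v ⟨k, h⟩ else 0

lemma extendZero_coe {n : ℕ} (v : Fin n → ℝ) (k : Fin n) : extendZero n v k = v k := by
  simp [extendZero]

lemma extendZero_of_le {n : ℕ} (v : Fin n → ℝ) {k : ℕ} (h : n ≤ k) : extendZero n v k = 0 := by
  simp [extendZero, h]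

lemma jacobi_mulVec (c : ℕ → ℝ) (n : ℕ) (v : Fin (n + 1) → ℝ) (i : Fin (n + 1)) :
    (jacobi c n).mulVec v i = offDiag c i * extendZero (n + 1) v (i + 1) +
      ∑ j ∈ Finset.range (n + 1),
        (if (i : ℕ) = j + 1 then offDiag c j * extendZero (n + 1) v j else 0) := by
  simp only [Matrix.mulVec, dotProduct, jacobi, Matrix.of_apply, add_mul, Finset.sum_add_distrib]
  congr 1
  · rw [Finset.sum_congr rfl fun j _ => by rw [← extendZero_coe v j]]
    rw [Fin.sum_univ_eq_sum_range
      (fun j => (if j = (i : ℕ) + 1 then offDiag c i else 0) * extendZero (n + 1) v j) (n + 1)]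
    simp only [ite_mul, zero_mul, Finset.sum_ite_eq', Finset.mem_range]
    split_ifs with h
    · rfl
    · rw [extendZero_of_le v (not_lt.1 h), mul_zero]
  · rw [Finset.sum_congr rfl fun j _ => by rw [← extendZero_coe v j]]
    rw [Fin.sum_univ_eq_sum_range
      (fun j => (if (i : ℕ) = j + 1 then offDiag c j else 0) * extendZero (n + 1) v j) (n + 1)]
    simp only [ite_mul, zero_mul]

/-- Every parameter sequence in `[0, 1]` is realized, up to order `n`, by a measure: the
spectral measure at the first basis vector of the squared Jacobi matrix. -/
lemma exists_measure {c : ℕ → ℝ} (h : ∀ i, c i ∈ Icc (0 : ℝ) 1) (n : ℕ) :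
    ∃ μ : Measure ℝ, IsProbabilityMeasure μ ∧ μ (Icc (0 : ℝ) 1)ᶜ = 0 ∧
      ∀ k < n, ∫ t, (tri c k).1.eval t ∂μ = c k * spread c k := by
  classical
  have hA := jacobi_isHermitian c n
  set U : Matrix (Fin (n + 1)) (Fin (n + 1)) ℝ := hA.eigenvectorUnitary.1 with hU
  have hrow : ∀ k, ∑ i, U k i ^ 2 = 1 := by
    intro k
    have h1 : U * star U = 1 := Unitary.coe_mul_star_self hA.eigenvectorUnitary
    have := congrFun (congrFun h1 k) k
    simpa [Matrix.mul_apply, Matrix.star_apply, sq] using this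
  have hcol : ∀ i, ∑ k, U k i ^ 2 = 1 := by
    intro i
    have h1 : star U * U = 1 := Unitary.coe_star_mul_self hA.eigenvectorUnitary
    have := congrFun (congrFun h1 i) i
    simpa [Matrix.mul_apply, Matrix.star_apply, sq] using this
  set V : Fin (n + 1) → ℕ → ℝ := fun i => extendZero (n + 1) fun k => U k i with hVdef
  have hV : ∀ i k, k < n + 1 → hA.eigenvalues i * V i k = offDiag c k * V i (k + 1) +
      ∑ j ∈ Finset.range (n + 1), (if k = j + 1 then offDiag c j * V i j else 0) := by
    intro i k hk
    have h1 := congrFun (hA.mulVec_eigenvectorBasis i) ⟨k, hk⟩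
    have h2 : (⇑(hA.eigenvectorBasis i) : Fin (n + 1) → ℝ) = fun k => U k i := by
      ext k; rfl
    rw [h2, jacobi_mulVec] at h1
    simp only [Pi.smul_apply, smul_eq_mul] at h1
    rw [hVdef]
    simp only
    rw [h1]
    simp [extendZero, hk]
  have hV0 : ∀ i, hA.eigenvalues i * V i 0 = offDiag c 0 * V i 1 := by
    intro i
    simpa using hV i 0 (by omega)
  have hVs : ∀ i, ∀ k < n, hA.eigenvalues i * V i (k + 1) =
      offDiag c (k + 1) * V i (k + 2) + offDiag c k * V i k := by
    intro i k hk
    rw [hV i (k + 1) (by omega)]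
    simp [show k < n + 1 by omega]
  have hVend : ∀ i, V i (n + 1) = 0 := fun i => extendZero_of_le _ le_rfl
  have hVsum : ∀ i, ∑ k ∈ Finset.range (n + 1), V i k ^ 2 = 1 := by
    intro i
    rw [← Fin.sum_univ_eq_sum_range (fun k => V i k ^ 2) (n + 1), ← hcol i]
    exact Finset.sum_congr rfl fun k _ => by rw [hVdef]; simp only [extendZero_coe]
  have hVrow : ∀ k < n + 1, ∑ i, V i k ^ 2 = 1 := by
    intro k hk
    rw [← hrow ⟨k, hk⟩]
    exact Finset.sum_congr rfl fun i _ => by rw [hVdef]; simp [extendZero, hk]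
  have heig : ∀ i, hA.eigenvalues i ^ 2 ∈ Icc (0 : ℝ) 1 := by
    intro i
    have h1 := eig_le h (ε := 1) (by norm_num) (hV0 i) (hVs i) (hVend i) (hVsum i)
    have h2 := eig_le h (ε := -1) (by norm_num) (hV0 i) (hVs i) (hVend i) (hVsum i)
    exact ⟨sq_nonneg _, by nlinarith⟩
  refine ⟨∑ i, ENNReal.ofReal (V i 0 ^ 2) • Measure.dirac (hA.eigenvalues i ^ 2), ⟨?_⟩, ?_, ?_⟩
  · simp only [Measure.coe_finsetSum, Finset.sum_apply, Measure.smul_apply, measure_univ,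
      smul_eq_mul, mul_one]
    rw [← ENNReal.ofReal_sum_of_nonneg fun i _ => sq_nonneg _, hVrow 0 (by omega),
      ENNReal.ofReal_one]
  · simp only [Measure.coe_finsetSum, Finset.sum_apply, Measure.smul_apply, smul_eq_mul]
    refine Finset.sum_eq_zero fun i _ => ?_
    rw [Measure.dirac_apply' _ measurableSet_Icc.compl, Set.indicator_of_notMem
      (by simpa using heig i), mul_zero]
  · intro k hk
    rw [integral_finsetSum_measure fun i _ => (integrable_dirac (by simp)).smul_measure (by simp)]
    have : ∀ i, ∫ t, (tri c k).1.eval t ∂(ENNReal.ofReal (V i 0 ^ 2) •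
        Measure.dirac (hA.eigenvalues i ^ 2)) = c k * spread c k * V i (k + 1) ^ 2 := by
      intro i
      rw [integral_smul_measure, integral_dirac, ENNReal.toReal_ofReal (sq_nonneg _),
        (tri_eval c _ k).1, smul_eq_mul, ← prod_gap]
      have h1 := (eig_orthPoly h (hV0 i) (hVs i) k hk.le).2
      simp only [← offDiag_sq h, Finset.prod_pow]
      rw [← mul_pow, ← mul_pow, ← h1, orthPoly, mul_comm]
    rw [Finset.sum_congr rfl fun i _ => this i, ← Finset.mul_sum, hVrow (k + 1) (by omega), mul_one]

/-! ### The moment space as an image of the cube -/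

/-- The map from canonical moments to moments. The 0-based index `k` carries the moment of
order `k + 1`. -/
def momMap (N : ℕ) (c : Fin N → ℝ) (k : Fin N) : ℝ := mom (extendZero N c) (k + 1)

lemma extendZero_mem {N : ℕ} {c : Fin N → ℝ} (hc : c ∈ Icc (0 : Fin N → ℝ) 1) (i : ℕ) :
    extendZero N c i ∈ Icc (0 : ℝ) 1 := by
  unfold extendZero
  split_ifs with h
  · exact ⟨hc.1 ⟨i, h⟩, hc.2 ⟨i, h⟩⟩
  · simp

lemma extendZero_mem_Ioo {N : ℕ} {c : Fin N → ℝ} (hc : c ∈ pi univ fun _ => Ioo (0 : ℝ) 1)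
    (i : ℕ) (hi : i < N) : extendZero N c i ∈ Ioo (0 : ℝ) 1 := by
  simpa [extendZero, hi] using hc ⟨i, hi⟩ (mem_univ _)

/-- The moment space is the image of the closed cube under `momMap`. -/
lemma momentSpace_eq (n : ℕ) : momentSpace n = momMap n '' Icc 0 1 := by
  ext m
  constructor
  · rintro ⟨μ, hμ, hsupp, hm⟩
    obtain ⟨c, hc, h⟩ := exists_param hsupp n
    refine ⟨fun i => c i, ⟨fun i => (hc i).1, fun i => (hc i).2⟩, funext fun k => ?_⟩
    rw [hm k, (moments_iff hsupp c n).1 h k k.2, momMap]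
    exact mom_congr fun i hi => by simp [extendZero, show i < n by omega]
  · rintro ⟨c, hc, rfl⟩
    obtain ⟨μ, hμ, hsupp, h⟩ := exists_measure (extendZero_mem hc) n
    exact ⟨μ, hμ, hsupp, fun j => ((moments_iff hsupp _ n).1 h j j.2).symm⟩

lemma momMap_injOn (N : ℕ) : InjOn (momMap N) (pi univ fun _ => Ioo (0 : ℝ) 1) := by
  intro c hc c' _ h
  ext k
  rw [← extendZero_coe c, ← extendZero_coe c']
  exact mom_inj (extendZero_mem_Ioo hc) (fun j hj => congrFun h ⟨j, hj⟩) k k.2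

/-- For interior parameters, the admissible values of the next moment form the interval of
length `spread` in which `c k` is the relative position of the actual moment. -/
lemma extSet_momMap {N : ℕ} {c : Fin N → ℝ} (hc : c ∈ pi univ fun _ => Ioo (0 : ℝ) 1)
    (k : Fin N) : extSet N (momMap N c) k =
      Icc (momMap N c k - c k * spread (extendZero N c) k)
        (momMap N c k + (1 - c k) * spread (extendZero N c) k) := by
  have hpos : 0 < spread (extendZero N c) k :=
    spread_pos fun i hi => extendZero_mem_Ioo hc i (hi.trans k.2)
  have hck := extendZero_coe c k
  ext r
  simp only [extSet, mem_ofPred_eq, momentSpace_eq]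
  constructor
  · rintro ⟨c', hc', h⟩
    have hagree : ∀ i < (k : ℕ), extendZero N c i = extendZero (k + 1) c' i := by
      refine mom_inj (fun i hi => extendZero_mem_Ioo hc i (hi.trans k.2)) fun j hj => ?_
      have := congrFun h ⟨j, by omega⟩
      simp only [hj, dif_pos, momMap] at this
      exact this.symm
    have hr := congrFun h ⟨k, by omega⟩
    simp only [lt_irrefl, dif_neg, not_false_eq_true, momMap] at hr
    have h1 := mom_sub hagree
    rw [hr, hck] at h1
    obtain ⟨h2, h3⟩ := extendZero_mem hc' k
    unfold momMap
    constructor <;> nlinarith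
  · rintro ⟨h1, h2⟩
    set s := spread (extendZero N c) k with hs
    -- The parameter that places the next moment at `r`.
    set y := c k + (r - momMap N c k) / s with hy
    have hy' : (y - c k) * s = r - momMap N c k := by rw [hy]; field_simp; ring
    have hy0 : 0 ≤ y := by by_contra! hlt; nlinarith
    have hy1 : y ≤ 1 := by by_contra! hlt; nlinarith
    let e : ℕ → ℝ := fun i => if i < (k : ℕ) then extendZero N c i else y
    have hext : ∀ i < (k : ℕ) + 1, extendZero (k + 1) (fun j => e j) i = e i := by
      intro i hi; simp [extendZero, hi]
    have he : ∀ i < (k : ℕ), extendZero N c i = e i := fun i hi => by simp [e, hi]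
    have hmem : ∀ i, extendZero N c i ∈ Icc (0 : ℝ) 1 := extendZero_mem
      ⟨fun i => (hc i (mem_univ _)).1.le, fun i => (hc i (mem_univ _)).2.le⟩
    refine ⟨fun j => e j, ⟨fun i => ?_, fun i => ?_⟩, funext fun i => ?_⟩
    · simp only [e]; split_ifs
      · exact (hmem i).1
      · exact hy0
    · simp only [e]; split_ifs
      · exact (hmem i).2
      · exact hy1
    · rw [momMap, mom_congr fun j hj => hext j (by omega)]
      split_ifs with hik
      · exact (mom_congr fun j hj => he j (by omega)).symm
      · have hik : (i : ℕ) = k := by omega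
        have h3 := mom_sub he
        rw [hck, show e k = y by simp [e], ← hs, hy', momMap] at h3
        rw [hik]; linarith

/-- On the open cube, the canonical moments invert `momMap`. -/
lemma canMom_momMap {N : ℕ} {c : Fin N → ℝ} (hc : c ∈ pi univ fun _ => Ioo (0 : ℝ) 1) :
    canMom N (momMap N c) = c := by
  ext k
  have hpos : 0 < spread (extendZero N c) k :=
    spread_pos fun i hi => extendZero_mem_Ioo hc i (hi.trans k.2)
  have hck := hc k (mem_univ _)
  have hle : momMap N c k - c k * spread (extendZero N c) k ≤
      momMap N c k + (1 - c k) * spread (extendZero N c) k := by nlinarith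
  rw [canMom, extSet_momMap hc, csInf_Icc hle, csSup_Icc hle, sub_sub_cancel,
    show ∀ m a b : ℝ, m + (1 - a) * b - (m - a * b) = b by intros; ring,
    mul_div_cancel_right₀ _ hpos.ne']

/-! ### The Jacobian determinant -/

lemma differentiable_extendZero (N k : ℕ) :
    Differentiable ℝ fun c : Fin N → ℝ => extendZero N c k := by
  unfold extendZero
  split_ifs <;> fun_prop

lemma differentiable_spread (N k : ℕ) :
    Differentiable ℝ fun c : Fin N → ℝ => spread (extendZero N c) k := by
  have := differentiable_extendZero N
  induction k with
  | zero => simp [spread]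
  | succ k ih =>
    simp only [spread, Finset.prod_range_succ] at ih ⊢
    fun_prop

lemma differentiable_tri (N k j : ℕ) :
    (Differentiable ℝ fun c : Fin N → ℝ => (tri (extendZero N c) k).1.coeff j) ∧
    (Differentiable ℝ fun c : Fin N → ℝ => (tri (extendZero N c) k).2.1.coeff j) ∧
    (Differentiable ℝ fun c : Fin N → ℝ => (tri (extendZero N c) k).2.2.coeff j) := by
  have := differentiable_extendZero N
  induction k generalizing j with
  | zero => simp [tri]
  | succ k ih =>
    obtain ⟨h1, h2, h3⟩ := ih j
    cases j with
    | zero =>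
      simp only [tri, Polynomial.coeff_add, Polynomial.coeff_sub, Polynomial.coeff_C_mul,
        Polynomial.coeff_X_mul_zero]
      refine ⟨?_, ?_, ?_⟩ <;> fun_prop
    | succ j =>
      obtain ⟨h4, h5, h6⟩ := ih j
      simp only [tri, Polynomial.coeff_add, Polynomial.coeff_sub, Polynomial.coeff_C_mul,
        Polynomial.coeff_X_mul]
      refine ⟨?_, ?_, ?_⟩ <;> fun_prop

lemma differentiable_mom (N k : ℕ) :
    Differentiable ℝ fun c : Fin N → ℝ => mom (extendZero N c) k := by
  induction k using Nat.strong_induction_on with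
  | _ k ih =>
    cases k with
    | zero => simp [mom_zero]
    | succ k =>
      simp only [mom_succ]
      exact ((differentiable_extendZero N k).mul (differentiable_spread N k)).sub
        (Differentiable.fun_sum fun j _ => (differentiable_tri N k j).1.mul (ih j j.2))

lemma differentiable_momMap (N : ℕ) : Differentiable ℝ (momMap N) :=
  differentiable_pi.2 fun k => differentiable_mom N (k + 1)

/-- The derivative of `momMap` is lower triangular, with diagonal entries
`spread`. -/
lemma fderiv_momMap_single {N : ℕ} (c : Fin N → ℝ) {k i : Fin N} (h : k ≤ i) :
    fderiv ℝ (momMap N) c (Pi.single i 1) k = if i = k then spread (extendZero N c) k else 0 := by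
  have h1 : HasDerivAt (fun s : ℝ => momMap N (c + s • Pi.single i 1))
      (fderiv ℝ (momMap N) c (Pi.single i 1)) 0 :=
    ((differentiable_momMap N c).hasFDerivAt.hasLineDerivAt (Pi.single i 1))
  have h2 := (hasDerivAt_pi.1 h1) k
  have h3 : (fun s : ℝ => momMap N (c + s • Pi.single i 1) k) =
      fun s => momMap N c k + s * if i = k then spread (extendZero N c) k else 0 := by
    ext s
    have hag : ∀ j < (k : ℕ), extendZero N c j = extendZero N (c + s • Pi.single i 1) j := by
      intro j hj
      have hjN : j < N := hj.trans k.2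
      have : (⟨j, hjN⟩ : Fin N) ≠ i := fun he => by
        have := congrArg Fin.val he
        have h' : (k : ℕ) ≤ i := h
        simp only at this; omega
      simp [extendZero, hjN, this]
    have := mom_sub hag
    rw [extendZero_coe, extendZero_coe] at this
    unfold momMap
    split_ifs with hik
    · subst hik
      simp at this
      linarith
    · have hki : k ≠ i := fun h => hik h.symm
      simp [hki] at this
      linarith
  rw [h3] at h2
  refine h2.unique ?_
  simpa using ((hasDerivAt_id (0 : ℝ)).mul_const
    (if i = k then spread (extendZero N c) k else 0)).const_add (momMap N c k)

lemma det_fderiv_momMap {N : ℕ} (c : Fin N → ℝ) :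
    (fderiv ℝ (momMap N) c).det = ∏ k : Fin N, spread (extendZero N c) k := by
  rw [ContinuousLinearMap.det, ← LinearMap.det_toMatrix', Matrix.det_of_isLowerTriangular]
  · refine Finset.prod_congr rfl fun k _ => ?_
    have := fderiv_momMap_single c (le_refl k)
    simpa [LinearMap.toMatrix'_apply] using this
  · intro i j hij
    have hij : i < j := hij
    have := fderiv_momMap_single c hij.le
    rw [if_neg hij.ne'] at this
    simpa [LinearMap.toMatrix'_apply] using this

lemma prod_spread (c : ℕ → ℝ) (N : ℕ) :
    ∏ k ∈ Finset.range N, spread c k =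
      ∏ i ∈ Finset.range N, (c i * (1 - c i)) ^ (N - 1 - i) := by
  induction N with
  | zero => simp
  | succ N ih =>
    rw [Finset.prod_range_succ, ih, spread, ← Finset.prod_mul_distrib, Finset.prod_range_succ,
      Nat.add_sub_cancel, Nat.sub_self, pow_zero, mul_one]
    refine Finset.prod_congr rfl fun i hi => ?_
    have := Finset.mem_range.1 hi
    rw [← pow_succ, show N - 1 - i + 1 = N - i by omega]

lemma det_fderiv_momMap' {N : ℕ} (c : Fin N → ℝ) :
    (fderiv ℝ (momMap N) c).det = ∏ i : Fin N, (c i * (1 - c i)) ^ (N - 1 - (i : ℕ)) := by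
  rw [det_fderiv_momMap, Fin.prod_univ_eq_prod_range (fun k => spread (extendZero N c) k) N,
    prod_spread, ← Fin.prod_univ_eq_prod_range
      (fun i => (extendZero N c i * (1 - extendZero N c i)) ^ (N - 1 - i)) N]
  simp only [extendZero_coe]

/-! ### Densities -/

/-- A product of measures with densities has the product density. -/
lemma pi_withDensity_prod {ι : Type*} [Fintype ι] (ρ : ι → Measure ℝ)
    [∀ i, IsProbabilityMeasure (ρ i)] (g : ι → ℝ → ℝ≥0∞) (hg : ∀ i, Measurable (g i))
    [∀ i, SigmaFinite ((ρ i).withDensity (g i))] :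
    Measure.pi (fun i => (ρ i).withDensity (g i)) =
      (Measure.pi ρ).withDensity fun x => ∏ i, g i (x i) := by
  refine Measure.pi_eq fun s hs => ?_
  have hm : ∀ i, Measurable ((s i).indicator (g i)) := fun i => (hg i).indicator (hs i)
  have hind : ∀ x : ι → ℝ, (univ.pi s).indicator (fun x => ∏ i, g i (x i)) x =
      ∏ i, (s i).indicator (g i) (x i) := by
    intro x
    by_cases hx : x ∈ univ.pi s
    · rw [indicator_of_mem hx]
      exact Finset.prod_congr rfl fun i _ => (indicator_of_mem (hx i (mem_univ i)) _).symm
    · rw [indicator_of_notMem hx]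
      obtain ⟨i, hi⟩ : ∃ i, x i ∉ s i := by simpa [Set.mem_pi] using hx
      exact (Finset.prod_eq_zero (Finset.mem_univ i) (indicator_of_notMem hi _)).symm
  have hindep : ProbabilityTheory.iIndepFun (fun i (x : ι → ℝ) => (s i).indicator (g i) (x i))
      (Measure.pi ρ) := ProbabilityTheory.iIndepFun_pi fun i => (hm i).aemeasurable
  rw [withDensity_apply _ (MeasurableSet.univ_pi hs), ← lintegral_indicator (MeasurableSet.univ_pi hs)]
  simp_rw [hind]
  rw [ProbabilityTheory.lintegral_prod_eq_prod_lintegral_of_indepFun Finset.univ _ hindep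
    fun i => (hm i).comp (measurable_pi_apply i)]
  refine Finset.prod_congr rfl fun i _ => ?_
  rw [withDensity_apply _ (hs i), ← lintegral_indicator (hs i)]
  exact (measurePreserving_eval ρ i).lintegral_comp (hm i)

lemma betaMeasure_eq_mathlib {a b : ℝ} :
    betaMeasure a b = ProbabilityTheory.betaMeasure a b := by
  unfold betaMeasure ProbabilityTheory.betaMeasure
  congr 1
  ext x
  rw [ProbabilityTheory.betaPDF_eq, Set.indicator_apply]
  simp only [mem_Ioo, ProbabilityTheory.beta, one_div_div]
  split_ifs <;> simp

/-- For `a = n + 1`, the powers in the Beta density are natural-number powers. -/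
lemma betaMeasure_nat (n : ℕ) {a : ℝ} (ha : a = n + 1) : betaMeasure a a =
    (volume.restrict (Ioo (0 : ℝ) 1)).withDensity fun x =>
      ENNReal.ofReal (Real.Gamma (a + a) / (Real.Gamma a * Real.Gamma a)) *
        ENNReal.ofReal ((x * (1 - x)) ^ n) := by
  have hpos : 0 < a := by rw [ha]; positivity
  rw [betaMeasure, withDensity_indicator measurableSet_Ioo]
  refine congrArg _ (funext fun x => ?_)
  have hG := Real.Gamma_pos_of_pos hpos
  have hG2 := Real.Gamma_pos_of_pos (add_pos hpos hpos)
  rw [← ENNReal.ofReal_mul (by positivity), show a - 1 = n by linarith, Real.rpow_natCast,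
    Real.rpow_natCast, mul_pow, mul_assoc]

/-- Up to a null set, the moment space is the image of the open cube: the faces of the cube are
null, hence so is their image under a differentiable map. -/
lemma restrict_momentSpace (N : ℕ) : (volume : Measure (Fin N → ℝ)).restrict (momentSpace N) =
    volume.restrict (momMap N '' pi univ fun _ => Ioo (0 : ℝ) 1) := by
  refine Measure.restrict_congr_set ?_
  have hsub : (pi univ fun _ : Fin N => Ioo (0 : ℝ) 1) ⊆ Icc 0 1 := fun c hc =>
    ⟨fun i => (hc i (mem_univ _)).1.le, fun i => (hc i (mem_univ _)).2.le⟩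
  rw [momentSpace_eq]
  refine (ae_eq_set.2 ⟨?_, by rw [sdiff_eq_empty.2 (image_mono hsub), measure_empty]⟩)
  refine measure_mono_null (t := momMap N '' (Icc 0 1 \ pi univ fun _ => Ioo 0 1)) ?_ ?_
  · rintro _ ⟨⟨c, hc, rfl⟩, h⟩
    exact ⟨c, ⟨hc, fun hs => h ⟨c, hs, rfl⟩⟩, rfl⟩
  refine addHaar_image_eq_zero_of_differentiableOn_of_addHaar_eq_zero volume
    (differentiable_momMap N).differentiableOn ?_
  have := Measure.univ_pi_Ioo_ae_eq_Icc (μ := fun _ : Fin N => (volume : Measure ℝ))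
    (f := 0) (g := 1)
  exact (ae_eq_set.1 this).2

/-- Chang–Kemperman–Studden: under the uniform distribution on the moment space
`M_N^{[0,1]}`, the canonical moments `C_1, …, C_N` are independent and
`C_j ∼ Beta(N-j+1, N-j+1)` (with 1-based `j`; below `j : Fin N` is 0-based, so the
parameter is `N - j`). -/
theorem statement7 (N : ℕ) (hN : 1 ≤ N) :
    (uniformMomentSpace N).map (canMom N) =
      Measure.pi fun j : Fin N => betaMeasure ((N : ℝ) - (j : ℕ)) ((N : ℝ) - (j : ℕ)) := by
  set S : Set (Fin N → ℝ) := pi univ fun _ => Ioo (0 : ℝ) 1 with hS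
  have hSm : MeasurableSet S := MeasurableSet.univ_pi fun _ => measurableSet_Ioo
  set ρ : Measure ℝ := volume.restrict (Ioo (0 : ℝ) 1) with hρ
  have : IsProbabilityMeasure ρ := ⟨by simp [hρ]⟩
  have hρS : (volume : Measure (Fin N → ℝ)).restrict S = Measure.pi fun _ => ρ := by
    rw [volume_pi, hS, Measure.restrict_pi_pi]
  set J : (Fin N → ℝ) → ℝ≥0∞ := fun c =>
    ∏ i : Fin N, ENNReal.ofReal ((c i * (1 - c i)) ^ (N - 1 - (i : ℕ))) with hJ
  set W : Measure (Fin N → ℝ) := (Measure.pi fun _ => ρ).withDensity J with hW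
  have hmap : Measure.map (momMap N) W = volume.restrict (momentSpace N) := by
    rw [restrict_momentSpace, ← map_withDensity_abs_det_fderiv_eq_addHaar volume hSm.nullMeasurableSet
      (fun c _ => (differentiable_momMap N c).hasFDerivAt.hasFDerivWithinAt) (momMap_injOn N)]
    congr 1
    rw [hW, ← hρS]
    refine withDensity_congr_ae ((ae_restrict_mem hSm).mono fun c hc => ?_)
    have hnn : ∀ i : Fin N, 0 ≤ (c i * (1 - c i)) ^ (N - 1 - (i : ℕ)) := fun i =>
      pow_nonneg (mul_nonneg (hc i (mem_univ _)).1.le (by linarith [(hc i (mem_univ _)).2])) _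
    simp only [hJ, det_fderiv_momMap']
    rw [abs_of_nonneg (Finset.prod_nonneg fun i _ => hnn i),
      ENNReal.ofReal_prod_of_nonneg fun i _ => hnn i]
  have hWS : ∀ᵐ c ∂W, c ∈ S := by
    refine (withDensity_absolutelyContinuous _ _).ae_le ?_
    rw [← hρS]
    exact ae_restrict_mem hSm
  have hcont : Continuous (momMap N) := (differentiable_momMap N).continuous
  -- Measurability of `canMom` itself is not available; the Borel inverse `g` of `momMap` agrees
  -- with it almost everywhere.
  obtain ⟨g, hg, hgS⟩ : ∃ g : (Fin N → ℝ) → (Fin N → ℝ), Measurable g ∧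
      ∀ c ∈ S, g (momMap N c) = c := by
    have he := hcont.continuousOn.measurableEmbedding hSm (momMap_injOn N)
    obtain ⟨g, hg, h⟩ := he.exists_measurable_extend measurable_subtype_coe fun _ => ⟨0⟩
    exact ⟨g, hg, fun c hc => congrFun h ⟨c, hc⟩⟩
  have hcan : Measure.map (canMom N) (volume.restrict (momentSpace N)) = W := by
    have hae : canMom N =ᵐ[volume.restrict (momentSpace N)] g := by
      rw [restrict_momentSpace]
      have him : MeasurableSet (momMap N '' S) :=
        hSm.image_of_continuousOn_injOn hcont.continuousOn (momMap_injOn N)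
      refine (ae_restrict_mem him).mono ?_
      rintro _ ⟨c, hc, rfl⟩
      rw [canMom_momMap hc, hgS c hc]
    rw [Measure.map_congr hae, ← hmap, Measure.map_map hg hcont.measurable]
    exact (Measure.map_congr (hWS.mono fun c hc => hgS c hc)).trans Measure.map_id
  have hvol : volume (momentSpace N) = W univ := by
    rw [← Measure.restrict_apply_univ, ← hmap, Measure.map_apply hcont.measurable MeasurableSet.univ,
      preimage_univ]
  set K : Fin N → ℝ≥0∞ := fun j => ENNReal.ofReal (Real.Gamma (((N : ℝ) - (j : ℕ)) +
    ((N : ℝ) - (j : ℕ))) / (Real.Gamma ((N : ℝ) - (j : ℕ)) * Real.Gamma ((N : ℝ) - (j : ℕ)))) with hK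
  -- The normalizing constant is not computed: both sides are multiples of `W`, and the product of
  -- Beta distributions has mass one.
  have hprob : ∀ j : Fin N, IsProbabilityMeasure
      (betaMeasure ((N : ℝ) - (j : ℕ)) ((N : ℝ) - (j : ℕ))) := fun j => by
    have : (0 : ℝ) < (N : ℝ) - (j : ℕ) := sub_pos.2 (by exact_mod_cast j.2)
    rw [betaMeasure_eq_mathlib]
    exact ProbabilityTheory.isProbabilityMeasureBeta this this
  have hbeta : (fun j : Fin N => betaMeasure ((N : ℝ) - (j : ℕ)) ((N : ℝ) - (j : ℕ))) =
      fun j : Fin N => ρ.withDensity fun x =>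
        K j * ENNReal.ofReal ((x * (1 - x)) ^ (N - 1 - (j : ℕ))) := by
    ext1 j
    refine betaMeasure_nat _ ?_
    have hj := j.2
    rw [Nat.sub_sub, Nat.cast_sub (by omega)]
    push_cast; ring
  have hpi : Measure.pi (fun j : Fin N => betaMeasure ((N : ℝ) - (j : ℕ)) ((N : ℝ) - (j : ℕ))) =
      (∏ j, K j) • W := by
    have hsf : ∀ j : Fin N, IsProbabilityMeasure (ρ.withDensity fun x =>
        K j * ENNReal.ofReal ((x * (1 - x)) ^ (N - 1 - (j : ℕ)))) := fun j => by
      rw [← congrFun hbeta j]; exact hprob j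
    rw [hbeta, pi_withDensity_prod (fun _ => ρ) _ fun j => by fun_prop]
    simp_rw [Finset.prod_mul_distrib]
    rw [hW, ← withDensity_smul _ (by fun_prop)]
    rfl
  have hone : (∏ j, K j) * W univ = 1 := by
    have := congrArg (fun ν : Measure (Fin N → ℝ) => ν univ) hpi
    simpa using this.symm
  rw [uniformMomentSpace, Measure.map_smul, hcan, hvol, hpi, ENNReal.eq_inv_of_mul_eq_one_left hone]

end
end

section
/- Let N ≥ 1, 1 ≤ p < ∞. Let g_1, …, g_N be i.i.d. random variables with density x ↦ exp(-|x|^p)/(2Γ(1+1/p)) on ℝ (the distribution G_p), set G = (g_1,…,g_N), and let U be uniform on [0,1], independent of G. Then the random vector U^{1/N} · G/‖G‖_p is uniformly distributed on the ball 𝔹_{N,p}. -/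
/-!
A product of copies of `G_p` has a density on `ℝ^N` that depends on `x` only through `‖x‖_p`, and
this is all that is used. For a density `φ(‖x‖)` and a measurable `f ≥ 0`, three linear
substitutions give
`∫ φ(‖x‖) ∫_{0<u<1} f(u^{1/N} x/‖x‖) du dx = K ∫_{‖y‖<1} f(y) dy`, with `K` independent of `f`
(`lintegral_radial`): `u = ‖x‖^N w` turns the argument of `f` into `w^{1/N} x`; after Tonelli,
`y = w^{1/N} x` has Jacobian `w` and leaves `f(y)` times an integral over `w > 0`; finally
`w = ‖y‖^N v` makes that integral independent of `y`. So the law is `K` times Lebesgue measure on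
the ball. Since `G_p` is a probability measure (`isProbabilityMeasure_Gp`), the total mass is one,
and therefore `K` is the inverse volume of the ball; neither quantity has to be computed.
-/

open MeasureTheory Filter Set
open scoped ENNReal Topology

noncomputable section

/-- The distribution `G_p` on `ℝ` with density `x ↦ exp(-|x|^p)/(2Γ(1+1/p))`. -/
def Gp (p : ℝ) : Measure ℝ :=
  volume.withDensity fun x =>
    ENNReal.ofReal (Real.exp (-|x| ^ p) / (2 * Real.Gamma (1 + 1 / p)))

/-- The real-valued density of `G_p`. -/
def gpDensity (p : ℝ) (x : ℝ) : ℝ := Real.exp (-|x| ^ p) / (2 * Real.Gamma (1 + 1 / p))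

/-- The `ℓ^p` norm on `ℝ^N`, as a plain function of `x : Fin N → ℝ`. -/
def ellNorm {N : ℕ} (p : ℝ) (x : Fin N → ℝ) : ℝ := (∑ j, |x j| ^ p) ^ (1 / p)

lemma integral_exp_neg_abs_rpow {p : ℝ} (hp : 0 < p) :
    ∫ x : ℝ, Real.exp (-|x| ^ p) = 2 * Real.Gamma (1 + 1 / p) := by
  rw [integral_comp_abs (f := fun x => Real.exp (-x ^ p)), integral_exp_neg_rpow hp, add_comm]

lemma gamma_const_pos {p : ℝ} (hp : 0 < p) : 0 < 2 * Real.Gamma (1 + 1 / p) := by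
  have := Real.Gamma_pos_of_pos (s := 1 + 1 / p) (by positivity)
  positivity

lemma integrable_gpDensity {p : ℝ} (hp : 0 < p) : Integrable (gpDensity p) := by
  refine Integrable.div_const ?_ _
  -- a nonzero Bochner integral forces integrability
  by_contra h
  have h1 := integral_exp_neg_abs_rpow hp
  rw [integral_undef h] at h1
  exact (gamma_const_pos hp).ne h1

lemma integral_gpDensity {p : ℝ} (hp : 0 < p) : ∫ x, gpDensity p x = 1 := by
  unfold gpDensity
  rw [integral_div, integral_exp_neg_abs_rpow hp, div_self (gamma_const_pos hp).ne']

lemma gpDensity_nonneg {p : ℝ} (hp : 0 < p) (x : ℝ) : 0 ≤ gpDensity p x :=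
  div_nonneg (Real.exp_pos _).le (gamma_const_pos hp).le

lemma isProbabilityMeasure_Gp {p : ℝ} (hp : 0 < p) : IsProbabilityMeasure (Gp p) := by
  constructor
  change volume.withDensity (fun x => ENNReal.ofReal (gpDensity p x)) univ = 1
  rw [withDensity_apply _ MeasurableSet.univ, Measure.restrict_univ,
    ← ofReal_integral_eq_lintegral_ofReal (integrable_gpDensity hp)
      (ae_of_all _ (gpDensity_nonneg hp)), integral_gpDensity hp, ENNReal.ofReal_one]

/-- The law of `G = (g_1, …, g_N)` has the product density. -/
lemma pi_Gp_eq (N : ℕ) {p : ℝ} (hp : 0 < p) :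
    (Measure.pi fun _ : Fin N => Gp p) =
      volume.withDensity fun x => ENNReal.ofReal (∏ i, gpDensity p (x i)) := by
  have := isProbabilityMeasure_Gp hp
  apply Measure.pi_eq
  intro s hs
  rw [withDensity_apply _ (MeasurableSet.univ_pi hs), volume_pi, Measure.restrict_pi_pi,
    ← ofReal_integral_eq_lintegral_ofReal
      (Integrable.fintype_prod fun i => (integrable_gpDensity hp).restrict)
      (ae_of_all _ fun x => Finset.prod_nonneg fun i _ => gpDensity_nonneg hp _),
    integral_fintype_prod_eq_prod, ENNReal.ofReal_prod_of_nonneg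
      (fun i _ => integral_nonneg (gpDensity_nonneg hp))]
  refine Finset.prod_congr rfl fun i _ => ?_
  rw [Gp, withDensity_apply _ (hs i)]
  exact ofReal_integral_eq_lintegral_ofReal (integrable_gpDensity hp).restrict
      (ae_of_all _ (gpDensity_nonneg hp))

/-- The product density is radial with respect to the `ℓ^p` norm. -/
lemma prod_gpDensity (N : ℕ) {p : ℝ} (hp : 0 < p) (x : Fin N → ℝ) :
    ∏ i, gpDensity p (x i) =
      Real.exp (-ellNorm p x ^ p) / (2 * Real.Gamma (1 + 1 / p)) ^ N := by
  have h : ellNorm p x ^ p = ∑ j, |x j| ^ p := by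
    rw [ellNorm, ← Real.rpow_mul (by positivity), one_div_mul_cancel hp.ne', Real.rpow_one]
  rw [h, ← Finset.sum_neg_distrib, Real.exp_sum]
  simp [gpDensity, Finset.prod_div_distrib]

lemma measurable_ellNorm {N : ℕ} (p : ℝ) : Measurable (ellNorm (N := N) p) := by
  unfold ellNorm
  fun_prop

lemma ellNorm_smul {N : ℕ} {p : ℝ} (hp : 0 < p) {c : ℝ} (hc : 0 < c) (x : Fin N → ℝ) :
    ellNorm p (c • x) = c * ellNorm p x := by
  simp only [ellNorm, Pi.smul_apply, smul_eq_mul, abs_mul, abs_of_pos hc]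
  simp_rw [Real.mul_rpow hc.le (abs_nonneg _)]
  rw [← Finset.mul_sum, Real.mul_rpow (by positivity) (by positivity), ← Real.rpow_mul hc.le,
    mul_one_div_cancel hp.ne', Real.rpow_one]

lemma ellNorm_pos {N : ℕ} {p : ℝ} {x : Fin N → ℝ} (hx : x ≠ 0) : 0 < ellNorm p x := by
  obtain ⟨i, hi⟩ := Function.ne_iff.mp hx
  refine Real.rpow_pos_of_pos (Finset.sum_pos' (fun j _ => by positivity) ⟨i, Finset.mem_univ _, ?_⟩) _
  exact Real.rpow_pos_of_pos (abs_pos.mpr hi) _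

lemma ellNorm_pow_lt_one {N : ℕ} (hN : N ≠ 0) {p : ℝ} (hp : 0 < p) (x : Fin N → ℝ) :
    ellNorm p x ^ N < 1 ↔ x ∈ pBall N p := by
  have h0 : 0 ≤ ∑ j, |x j| ^ p := by positivity
  rw [pow_lt_one_iff_of_nonneg (by unfold ellNorm; positivity) hN, ellNorm,
    Real.rpow_lt_one_iff' h0 (by positivity)]
  rfl

/-- Linear substitution on the line. -/
lemma lintegral_comp_mul_pos {F : ℝ → ℝ≥0∞} (hF : Measurable F) {a : ℝ} (ha : 0 < a) :
    ∫⁻ u, F u = ENNReal.ofReal a * ∫⁻ w, F (a * w) := by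
  conv_lhs => rw [← Real.smul_map_volume_mul_left ha.ne']
  rw [lintegral_smul_measure, lintegral_map hF (by fun_prop), abs_of_pos ha, smul_eq_mul]

/-- Dilation on `ℝ^N` by the factor `w^{1/N}`, whose Jacobian is `w`. -/
lemma lintegral_comp_rpow_smul {N : ℕ} (hN : N ≠ 0) {H : (Fin N → ℝ) → ℝ≥0∞} (hH : Measurable H)
    {w : ℝ} (hw : 0 < w) :
    ∫⁻ x, H (w ^ ((1 : ℝ) / N) • x) = ENNReal.ofReal w⁻¹ * ∫⁻ y, H y := by
  have hb : 0 < w ^ ((1 : ℝ) / N) := by positivity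
  rw [← lintegral_map (f := H) (g := fun x => w ^ ((1 : ℝ) / N) • x) hH (by fun_prop),
    Measure.map_addHaar_smul _ hb.ne', lintegral_smul_measure, Module.finrank_fin_fun, one_div,
    Real.rpow_inv_natCast_pow hw.le hN, abs_of_pos (inv_pos.mpr hw), smul_eq_mul]

/-- If `x` has density `φ(‖x‖_p)` and `u` is uniform on `(0, 1)`, the image of their joint law under
`(x, u) ↦ u^{1/N} x/‖x‖_p` is a constant multiple of Lebesgue measure on the `ℓ^p` ball. The
constant may be infinite. -/
theorem lintegral_radial {N : ℕ} (hN : N ≠ 0) {p : ℝ} (hp : 0 < p) {φ : ℝ → ℝ≥0∞} (hφ : Measurable φ)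
    {f : (Fin N → ℝ) → ℝ≥0∞} (hf : Measurable f) :
    ∫⁻ x, φ (ellNorm p x) *
        ∫⁻ u in Ioo (0 : ℝ) 1, f (u ^ ((1 : ℝ) / N) • (ellNorm p x)⁻¹ • x) =
      (∫⁻ v in Ioi (0 : ℝ), φ (v ^ (-((1 : ℝ) / N))) * ENNReal.ofReal (v⁻¹ * v⁻¹)) *
        ∫⁻ y in pBall N p, f y := by
  have : Nonempty (Fin N) := ⟨⟨0, Nat.pos_of_ne_zero hN⟩⟩
  have hn : Measurable (ellNorm (N := N) p) := measurable_ellNorm p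
  have hne : ∀ᵐ x : Fin N → ℝ, x ≠ 0 := by
    rw [ae_iff]; simp
  let J : ℝ → ℝ≥0∞ := (Iio 1).indicator 1
  have hJ : Measurable J := measurable_one.indicator measurableSet_Iio
  have hpow : ∀ {r : ℝ}, 0 < r → (r ^ N) ^ ((1 : ℝ) / N) = r := fun {r} hr => by
    rw [one_div, Real.pow_rpow_inv_natCast hr.le hN]
  have hB : MeasurableSet (pBall N p) := by
    unfold pBall
    exact measurableSet_lt (by fun_prop) measurable_const
  -- after the substitution `u = ‖x‖ᴺ w`
  have step1 : ∀ᵐ x : Fin N → ℝ, φ (ellNorm p x) *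
        ∫⁻ u in Ioo (0 : ℝ) 1, f (u ^ ((1 : ℝ) / N) • (ellNorm p x)⁻¹ • x) =
      ∫⁻ w in Ioi (0 : ℝ), φ (ellNorm p x) * (ENNReal.ofReal (ellNorm p x ^ N) *
        (J (ellNorm p x ^ N * w) * f (w ^ ((1 : ℝ) / N) • x))) := by
    filter_upwards [hne] with x hx
    have hr : 0 < ellNorm p x := ellNorm_pos hx
    rw [lintegral_const_mul _ (by fun_prop), lintegral_const_mul _ (by fun_prop),
      ← lintegral_indicator measurableSet_Ioo, ← lintegral_indicator measurableSet_Ioi,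
      lintegral_comp_mul_pos (Measurable.indicator (by fun_prop) measurableSet_Ioo)
        (pow_pos hr N)]
    congr 2
    refine lintegral_congr fun w => ?_
    by_cases hw : 0 < w
    · have e : (ellNorm p x ^ N * w) ^ ((1 : ℝ) / N) • (ellNorm p x)⁻¹ • x
          = w ^ ((1 : ℝ) / N) • x := by
        rw [Real.mul_rpow (by positivity) hw.le, hpow hr, smul_smul]
        congr 1
        field_simp
      have hw' : 0 < ellNorm p x ^ N * w := by positivity
      simp only [J, indicator, mem_Ioo, mem_Ioi, mem_Iio, hw, hw', e, true_and, if_true,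
        Pi.one_apply, ite_mul, one_mul, zero_mul]
    · have hw' : ¬ 0 < ellNorm p x ^ N * w := by
        rw [mul_pos_iff_of_pos_left (by positivity)]; exact hw
      simp [indicator, hw, hw']
  rw [lintegral_congr_ae step1, lintegral_lintegral_swap (by fun_prop)]
  -- after the substitution `y = w^{1/N} x`
  have step2 : ∀ w ∈ Ioi (0 : ℝ), ∫⁻ x, φ (ellNorm p x) * (ENNReal.ofReal (ellNorm p x ^ N) *
        (J (ellNorm p x ^ N * w) * f (w ^ ((1 : ℝ) / N) • x))) =
      ∫⁻ y, (J (ellNorm p y ^ N) * f y) * (φ (w ^ (-((1 : ℝ) / N)) * ellNorm p y) *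
        (ENNReal.ofReal (ellNorm p y ^ N * (w⁻¹ * w⁻¹)))) := by
    intro w hw
    have hw : 0 < w := hw
    have hb : 0 < w ^ ((1 : ℝ) / N) := by positivity
    have hwN : (w ^ ((1 : ℝ) / N)) ^ N = w := by rw [one_div, Real.rpow_inv_natCast_pow hw.le hN]
    have h := lintegral_comp_rpow_smul hN (H := fun y => φ (w ^ (-((1 : ℝ) / N)) * ellNorm p y) *
      (ENNReal.ofReal (ellNorm p y ^ N * w⁻¹) * (J (ellNorm p y ^ N) * f y))) (by fun_prop) hw
    rw [← lintegral_const_mul _ (by fun_prop)] at h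
    refine Eq.trans ?_ (h.trans ?_)
    · refine lintegral_congr fun x => ?_
      simp only [ellNorm_smul hp hb, mul_pow, hwN]
      rw [← mul_assoc (w ^ (-((1 : ℝ) / N))), ← Real.rpow_add hw, neg_add_cancel, Real.rpow_zero,
        one_mul, mul_comm w, mul_assoc (ellNorm p x ^ N) w, mul_inv_cancel₀ hw.ne', mul_one]
    · refine lintegral_congr fun y => ?_
      have hwi : 0 ≤ w⁻¹ := (inv_pos.mpr hw).le
      rw [mul_comm (ellNorm p y ^ N) (w⁻¹ * w⁻¹), mul_comm (ellNorm p y ^ N) w⁻¹,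
        ENNReal.ofReal_mul (mul_nonneg hwi hwi), ENNReal.ofReal_mul hwi, ENNReal.ofReal_mul hwi]
      ring
  rw [setLIntegral_congr_fun measurableSet_Ioi step2, lintegral_lintegral_swap (by fun_prop)]
  rw [← lintegral_const_mul _ hf, ← lintegral_indicator hB]
  refine lintegral_congr_ae ?_
  filter_upwards [hne] with y hy
  have hr : 0 < ellNorm p y := ellNorm_pos hy
  by_cases hyB : y ∈ pBall N p
  swap
  · have : ¬ ellNorm p y ^ N < 1 := by rwa [ellNorm_pow_lt_one hN hp]
    simp [J, indicator, this, hyB]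
  have hy1 : ellNorm p y ^ N < 1 := (ellNorm_pow_lt_one hN hp y).2 hyB
  rw [lintegral_const_mul _ (by fun_prop), indicator_of_mem hyB, mul_comm]
  congr 1
  swap
  · simp [J, hy1]
  -- the substitution `w = ‖y‖ᴺ v` removes the dependence on `y`
  rw [← lintegral_indicator measurableSet_Ioi, ← lintegral_indicator measurableSet_Ioi,
    lintegral_comp_mul_pos (Measurable.indicator (by fun_prop) measurableSet_Ioi) (pow_pos hr N),
    ← lintegral_const_mul' _ _ ENNReal.ofReal_ne_top]
  refine lintegral_congr fun v => ?_
  by_cases hv : 0 < v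
  · have hv' : 0 < ellNorm p y ^ N * v := by positivity
    have e : (ellNorm p y ^ N * v) ^ (-((1 : ℝ) / N)) * ellNorm p y = v ^ (-((1 : ℝ) / N)) := by
      rw [Real.mul_rpow (by positivity) hv.le, Real.rpow_neg (by positivity), hpow hr]
      field_simp
    rw [indicator_of_mem (mem_Ioi.2 hv'), indicator_of_mem (mem_Ioi.2 hv), e, mul_left_comm,
      ← ENNReal.ofReal_mul (by positivity)]
    congr 2
    field_simp
  · have hv' : ¬ 0 < ellNorm p y ^ N * v := by
      rw [mul_pos_iff_of_pos_left (by positivity)]; exact hv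
    simp [indicator, hv, hv']

theorem statement9 (N : ℕ) (hN : 1 ≤ N) (p : ℝ) (hp : 1 ≤ p) :
    -- with G = (g_1,…,g_N) i.i.d. G_p and U uniform on [0,1] independent of G,
    -- U^{1/N} · G/‖G‖_p is uniform on the ball 𝔹_{N,p}
    (((Measure.pi fun _ : Fin N => Gp p).prod
          (volume.restrict (Set.Icc (0 : ℝ) 1))).map
        fun q => fun i => q.2 ^ ((1 : ℝ) / N) * (q.1 i / (∑ j, |q.1 j| ^ p) ^ (1 / p))) =
      uniformBall N p := by
  have hp0 : 0 < p := by linarith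
  have hN0 : N ≠ 0 := by omega
  have := isProbabilityMeasure_Gp hp0
  have : IsProbabilityMeasure (volume.restrict (Set.Icc (0 : ℝ) 1)) := ⟨by simp⟩
  set T : (Fin N → ℝ) × ℝ → Fin N → ℝ := fun q => fun i =>
    q.2 ^ ((1 : ℝ) / N) * (q.1 i / (∑ j, |q.1 j| ^ p) ^ (1 / p)) with hT
  have hTm : Measurable T := by
    rw [hT]; fun_prop
  have hTe : ∀ x u, T (x, u) = u ^ ((1 : ℝ) / N) • (ellNorm p x)⁻¹ • x := by
    intro x u
    ext i
    simp only [hT, ellNorm, Pi.smul_apply, smul_eq_mul]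
    ring
  let φ : ℝ → ℝ≥0∞ := fun r =>
    ENNReal.ofReal (Real.exp (-r ^ p) / (2 * Real.Gamma (1 + 1 / p)) ^ N)
  have hφ : Measurable φ := by fun_prop
  have hn : Measurable (ellNorm (N := N) p) := measurable_ellNorm p
  set K : ℝ≥0∞ :=
    ∫⁻ v in Ioi (0 : ℝ), φ (v ^ (-((1 : ℝ) / N))) * ENNReal.ofReal (v⁻¹ * v⁻¹) with hK
  have key : ((Measure.pi fun _ : Fin N => Gp p).prod
      (volume.restrict (Set.Icc (0 : ℝ) 1))).map T = K • volume.restrict (pBall N p) := by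
    ext A hA
    have hind : Measurable (A.indicator (1 : (Fin N → ℝ) → ℝ≥0∞)) := measurable_one.indicator hA
    rw [← lintegral_indicator_one hA, lintegral_map hind hTm,
      lintegral_prod (fun q => A.indicator 1 (T q)) (hind.comp hTm).aemeasurable, pi_Gp_eq N hp0]
    simp_rw [prod_gpDensity N hp0]
    change ∫⁻ x, _ ∂(volume.withDensity (φ ∘ ellNorm p)) = _
    rw [lintegral_withDensity_eq_lintegral_mul _ (hφ.comp hn)
      (Measurable.lintegral_prod_right' (f := fun q => A.indicator 1 (T q)) (hind.comp hTm))]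
    simp only [hTe, ← Measure.restrict_congr_set (Ioo_ae_eq_Icc (μ := volume) (a := (0 : ℝ)) (b := 1))]
    refine (lintegral_radial hN0 hp0 hφ hind).trans ?_
    rw [lintegral_indicator_one hA]
    rfl
  -- both sides have total mass one, which identifies the constant
  have h1 := congrArg (fun ν => ν univ) key
  simp only [Measure.map_apply hTm MeasurableSet.univ, preimage_univ, measure_univ,
    Measure.smul_apply, Measure.restrict_apply_univ, smul_eq_mul] at h1
  rw [key, uniformBall, ENNReal.eq_inv_of_mul_eq_one_left h1.symm]

end
end

section
/- Let N ≥ 1, 1 ≤ p < ∞, and let a_1,…,a_N, b > 0. Let X = (X_1,…,X_N) have the law on 𝔹_{N,p} with density proportional to (1-‖x‖_p^p)^{b-1} ∏_{j=1}^N |x_j|^{p a_j - 1} with respect to Lebesgue measure. Then the random variables |X_1|, …, |X_N| are negatively associated: for every pair of disjoint subsets A_1, A_2 of {1,…,N} and every pair of bounded measurable coordinatewise nondecreasing functions f_1, f_2, Cov(f_1(|X_i|, i ∈ A_1), f_2(|X_j|, j ∈ A_2)) ≤ 0. -/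
open MeasureTheory Filter Set
open scoped ENNReal Topology

/-!
Write `q x = ∑ |x_i|^p`, and split the coordinates into the block `u` indexed by `A₁` and the
block `v` of all remaining ones, so that `f₁` depends on `|u|` only and `f₂` on `|v|` only. The
density is `w(u) w(v) (1 - q u - q v)_+^(b-1)` with `w` homogeneous.

For fixed `u` with `q u < 1`, the substitution `v = (1 - q u)^(1/p) v'` factors
`1 - q u - q v = (1 - q u)(1 - q v')`, so integrating out `v` leaves
`K(q u) H(q u)`, where `K` does not depend on `f₂` and `H(t)`, the integral of
`f₂(|(1 - t)^(1/p) v'|)`, is nonincreasing in `t` because `f₂` is nondecreasing (`inner_scale`).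

It remains to compare `f₁(|u|)` with the nonincreasing function `H(q u)` of the radius of `u`
alone. In polar coordinates `u = t σ` with `q σ = 1`, the homogeneity of `w` makes the weighted
Lebesgue measure a product (`lintegral_polar_wt`); integrating out `σ` turns `f₁` into a
nondecreasing function of `t`, and the one-dimensional Chebyshev association inequality
(`chebyshev`) concludes.

This is the structure of the Dirichlet law: the masses of the two blocks are complementary, and
independent of the directions inside the blocks. Only monotonicity along rays is needed (`RadMono`).
The inequality is proved for nonnegative functions with `∫⁻`, in the homogeneous form
`J(φ,ψ) J(1,1) ≤ J(φ,1) J(1,ψ)` which avoids all integrability questions, and bounded functions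
are reduced to nonnegative ones by adding constants.
-/

noncomputable section

/-! ### Homogeneity of the weighted Lebesgue measure -/

/-- The `p`-th power `∑ |x_i|^p` of the `ℓ^p` norm. -/
def qf {ι : Type*} [Fintype ι] (p : ℝ) (x : ι → ℝ) : ℝ := ∑ i, |x i| ^ p

/-- The weight `∏ |x_j|^(p a_j - 1)`. -/
def wt {ι : Type*} [Fintype ι] (p : ℝ) (a : ι → ℝ) (x : ι → ℝ) : ℝ≥0∞ :=
  ∏ j, ENNReal.ofReal (|x j| ^ (p * a j - 1))

/-- The function `t ↦ t_+^(b-1)`, equal to `0` for `t ≤ 0`. -/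
def kk (b t : ℝ) : ℝ≥0∞ := if 0 < t then ENNReal.ofReal (t ^ (b - 1)) else 0

/-- `φ` is nondecreasing along every ray from the origin. -/
def RadMono {ι : Type*} (φ : (ι → ℝ) → ℝ≥0∞) : Prop :=
  ∀ (x : ι → ℝ) (s t : ℝ), 0 ≤ s → s ≤ t → φ (s • x) ≤ φ (t • x)

section
variable {ι : Type*} [Fintype ι] {p b : ℝ} {a : ι → ℝ}

@[fun_prop]
lemma measurable_qf : Measurable (qf p : (ι → ℝ) → ℝ) := by
  unfold qf; fun_prop

@[fun_prop]
lemma measurable_wt : Measurable (wt p a) := by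
  unfold wt; fun_prop

@[fun_prop]
lemma measurable_kk : Measurable (kk b) := by
  unfold kk
  exact Measurable.ite measurableSet_Ioi (by fun_prop) (by fun_prop)

lemma qf_smul {c : ℝ} (hc : 0 ≤ c) (x : ι → ℝ) : qf p (c • x) = c ^ p * qf p x := by
  simp [qf, Finset.mul_sum, abs_mul, abs_of_nonneg hc, Real.mul_rpow hc (abs_nonneg _)]

lemma qf_nonneg (x : ι → ℝ) : 0 ≤ qf p x :=
  Finset.sum_nonneg fun _ _ => Real.rpow_nonneg (abs_nonneg _) _

lemma qf_pos {x : ι → ℝ} (hx : x ≠ 0) : 0 < qf p x := by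
  obtain ⟨i, hi⟩ := Function.ne_iff.1 hx
  exact Finset.sum_pos' (fun _ _ => Real.rpow_nonneg (abs_nonneg _) _)
    ⟨i, Finset.mem_univ _, Real.rpow_pos_of_pos (abs_pos.2 hi) _⟩

lemma wt_smul {c : ℝ} (hc : 0 < c) (x : ι → ℝ) :
    wt p a (c • x) = ENNReal.ofReal (c ^ (∑ j, (p * a j - 1))) * wt p a x := by
  simp only [wt, Pi.smul_apply, smul_eq_mul, abs_mul, abs_of_pos hc]
  rw [Real.rpow_sum_of_pos hc, ENNReal.ofReal_prod_of_nonneg (fun _ _ => by positivity),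
    ← Finset.prod_mul_distrib]
  refine Finset.prod_congr rfl fun j _ => ?_
  rw [Real.mul_rpow hc.le (abs_nonneg _), ENNReal.ofReal_mul (by positivity)]

lemma kk_mul {s : ℝ} (hs : 0 < s) (r : ℝ) : kk b (s * r) = kk b s * kk b r := by
  unfold kk
  by_cases hr : 0 < r
  · rw [if_pos (mul_pos hs hr), if_pos hs, if_pos hr, Real.mul_rpow hs.le hr.le,
      ENNReal.ofReal_mul (by positivity)]
  · rw [if_neg hr, if_neg (by rwa [mul_pos_iff_of_pos_left hs]), mul_zero]

lemma lintegral_scale {E : Type*} [NormedAddCommGroup E] [NormedSpace ℝ E] [FiniteDimensional ℝ E]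
    [MeasurableSpace E] [BorelSpace E] (μ : Measure E) [μ.IsAddHaarMeasure] {c : ℝ} (hc : 0 < c)
    {φ : E → ℝ≥0∞} (hφ : Measurable φ) :
    ∫⁻ x, φ x ∂μ = ENNReal.ofReal (c ^ Module.finrank ℝ E) * ∫⁻ x, φ (c • x) ∂μ := by
  rw [← lintegral_map hφ (measurable_const_smul c), Measure.map_addHaar_smul μ hc.ne',
    lintegral_smul_measure, smul_eq_mul, ← mul_assoc, ← ENNReal.ofReal_mul (by positivity),
    abs_of_pos (by positivity), mul_inv_cancel₀ (by positivity), ENNReal.ofReal_one, one_mul]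

lemma lintegral_Ioi_scale {c : ℝ} (hc : 0 < c) {φ : ℝ → ℝ≥0∞} (hφ : Measurable φ) :
    ∫⁻ t in Ioi 0, φ t = ENNReal.ofReal c * ∫⁻ t in Ioi 0, φ (c * t) := by
  rw [← lintegral_indicator measurableSet_Ioi,
    lintegral_scale volume hc (hφ.indicator measurableSet_Ioi),
    ← lintegral_indicator measurableSet_Ioi]
  simp [indicator, hc]

/-- The measure with density `wt p a` is homogeneous of degree `p ∑ a_j`. -/
lemma lintegral_wt_scale {c : ℝ} (hc : 0 < c) {φ : (ι → ℝ) → ℝ≥0∞} (hφ : Measurable φ) :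
    ∫⁻ x, wt p a x * φ x =
      ENNReal.ofReal (c ^ (p * ∑ j, a j)) * ∫⁻ x, wt p a x * φ (c • x) := by
  rw [lintegral_scale volume hc (by fun_prop)]
  simp only [wt_smul hc, mul_assoc]
  rw [lintegral_const_mul _ (by fun_prop), ← mul_assoc, ← ENNReal.ofReal_mul (by positivity),
    ← Real.rpow_natCast, ← Real.rpow_add hc]
  congr 4
  simp [Finset.mul_sum]

/-- The integral over one block when the other one leaves mass `s`: rescaling by `s^(1/p)` factors
out the dependence on `s` except inside `φ`. Both sides vanish for `s ≤ 0`; the `max` makes the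
right-hand side monotone in `s` on the whole line. -/
lemma inner_scale (hp : 0 < p) (s : ℝ) {φ : (ι → ℝ) → ℝ≥0∞} (hφ : Measurable φ) :
    ∫⁻ v, wt p a v * (kk b (s - qf p v) * φ v) =
      ENNReal.ofReal (s ^ (∑ j, a j)) * kk b s *
        ∫⁻ v, wt p a v * (kk b (1 - qf p v) * φ ((max s 0) ^ (1 / p) • v)) := by
  rcases le_or_gt s 0 with hs | hs
  · have h1 : kk b s = 0 := if_neg hs.not_gt
    have h2 : ∀ v : ι → ℝ, kk b (s - qf p v) = 0 := fun v =>
      if_neg (by have := qf_nonneg (p := p) v; linarith)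
    simp [h1, h2]
  · have hc : 0 < s ^ (1 / p) := by positivity
    rw [lintegral_wt_scale hc (by fun_prop), max_eq_left hs.le, ← Real.rpow_mul hs.le,
      ← mul_assoc (1 / p), one_div_mul_cancel hp.ne', one_mul, mul_assoc (ENNReal.ofReal _)]
    congr 1
    rw [← lintegral_const_mul _ (by fun_prop)]
    refine lintegral_congr fun v => ?_
    rw [qf_smul hc.le, ← Real.rpow_mul hs.le, one_div_mul_cancel hp.ne', Real.rpow_one,
      show s - s * qf p v = s * (1 - qf p v) by ring, kk_mul hs]
    ring

/-! ### Polar coordinates -/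

/-- Polar coordinates with respect to the sup norm, the norm of `ι → ℝ`. -/
lemma lintegral_polar [Nonempty ι] {Φ : (ι → ℝ) → ℝ≥0∞} (hΦ : Measurable Φ) :
    ∫⁻ x, Φ x = ∫⁻ θ : Metric.sphere (0 : ι → ℝ) 1, (∫⁻ r in Ioi (0 : ℝ),
      ENNReal.ofReal (r ^ (Fintype.card ι - 1)) * Φ (r • θ.1)) ∂(volume : Measure (ι → ℝ)).toSphere := by
  have hmp := (volume : Measure (ι → ℝ)).measurePreserving_homeomorphUnitSphereProd
  have h1 : ∫⁻ x, Φ x = ∫⁻ x : ({(0)}ᶜ : Set (ι → ℝ)), Φ x.1 ∂(Measure.comap Subtype.val volume) := by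
    rw [lintegral_subtype_comap (measurableSet_singleton _).compl Φ, restrict_compl_singleton]
  have h2 := hmp.symm (e := (homeomorphUnitSphereProd (ι → ℝ)).toMeasurableEquiv)
  rw [h1, ← h2.lintegral_comp (by fun_prop), lintegral_prod _ (by fun_prop)]
  refine lintegral_congr fun θ => ?_
  rw [Measure.volumeIoiPow, lintegral_withDensity_eq_lintegral_mul _ (by fun_prop) (by fun_prop),
    ← lintegral_subtype_comap measurableSet_Ioi, Module.finrank_fintype_fun_eq_card]
  rfl

/-- Polar coordinates adapted to `qf p`: the directions `θ` of the sup-norm sphere are renormalized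
to `σ θ` with `qf p (σ θ) = 1`, which makes `qf p` a function of the radius `t` only. -/
lemma lintegral_polar_wt [Nonempty ι] (hp : 0 < p) : ∃ (D : Metric.sphere (0 : ι → ℝ) 1 → ℝ≥0∞)
    (σ : Metric.sphere (0 : ι → ℝ) 1 → ι → ℝ), Measurable D ∧ Measurable σ ∧
    (∀ θ, qf p (σ θ) = 1) ∧ ∀ φ : (ι → ℝ) → ℝ≥0∞, Measurable φ → ∫⁻ x, wt p a x * φ x =
      ∫⁻ θ, D θ * (∫⁻ t in Ioi (0 : ℝ), ENNReal.ofReal (t ^ (p * ∑ j, a j - 1)) * φ (t • σ θ))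
        ∂(volume : Measure (ι → ℝ)).toSphere := by
  have hq : ∀ θ : Metric.sphere (0 : ι → ℝ) 1, 0 < qf p θ.1 := fun θ =>
    qf_pos fun h => by simpa [h] using θ.2
  set α : Metric.sphere (0 : ι → ℝ) 1 → ℝ := fun θ => (qf p θ.1) ^ (-(1 / p)) with hα
  have hαm : Measurable α := by fun_prop
  have hα0 : ∀ θ, 0 < α θ := fun θ => Real.rpow_pos_of_pos (hq θ) _
  refine ⟨fun θ => wt p a θ.1 * ENNReal.ofReal (α θ ^ (p * ∑ j, a j)), fun θ => α θ • θ.1,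
    by fun_prop, by fun_prop, fun θ => ?_, fun φ hφ => ?_⟩
  · rw [qf_smul (hα0 θ).le, ← Real.rpow_mul (hq θ).le, neg_mul, one_div_mul_cancel hp.ne',
      Real.rpow_neg_one, inv_mul_cancel₀ (hq θ).ne']
  · rw [lintegral_polar (by fun_prop)]
    refine lintegral_congr fun θ => ?_
    calc _ = ∫⁻ r in Ioi (0 : ℝ), wt p a θ.1 *
          (ENNReal.ofReal (r ^ (p * ∑ j, a j - 1)) * φ (r • θ.1)) := by
          refine setLIntegral_congr_fun measurableSet_Ioi fun r hr => ?_
          have hr : 0 < r := hr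
          have : p * ∑ j, a j - 1 = ((Fintype.card ι - 1 : ℕ) : ℝ) + ∑ j, (p * a j - 1) := by
            rw [Nat.cast_pred Fintype.card_pos]
            simp [Finset.mul_sum]
          simp only [wt_smul hr]
          rw [this, Real.rpow_add hr, Real.rpow_natCast, ENNReal.ofReal_mul (by positivity)]
          ring
      _ = wt p a θ.1 * ∫⁻ r in Ioi (0 : ℝ),
          (ENNReal.ofReal (r ^ (p * ∑ j, a j - 1)) * φ (r • θ.1)) :=
          lintegral_const_mul _ (by fun_prop)
      _ = _ := by
          rw [lintegral_Ioi_scale (hα0 θ) (by fun_prop), mul_assoc]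
          congr 1
          rw [← lintegral_const_mul _ (by fun_prop), ← lintegral_const_mul _ (by fun_prop)]
          refine setLIntegral_congr_fun measurableSet_Ioi fun t ht => ?_
          have ht : 0 < t := ht
          simp only
          rw [Real.mul_rpow (hα0 θ).le ht.le, ENNReal.ofReal_mul (Real.rpow_nonneg (hα0 θ).le _),
            smul_smul, mul_comm t]
          have : α θ ^ (p * ∑ j, a j) = α θ * α θ ^ (p * ∑ j, a j - 1) := by
            rw [Real.rpow_sub_one (hα0 θ).ne', mul_div_cancel₀ _ (hα0 θ).ne']
          rw [this, ENNReal.ofReal_mul (hα0 θ).le]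
          ring

/-! ### Chebyshev's inequality -/

lemma rearrange {x y z w : ℝ≥0∞} (hxy : x ≤ y) (hwz : w ≤ z) :
    x * z + y * w ≤ x * w + y * z := by
  obtain ⟨δ, rfl⟩ := exists_add_of_le hxy
  obtain ⟨ε, rfl⟩ := exists_add_of_le hwz
  calc _ ≤ x * (w + ε) + (x + δ) * w + δ * ε := le_self_add
    _ = _ := by ring

/-- Chebyshev's association inequality for a nondecreasing and a nonincreasing function. -/
lemma chebyshev (τ : Measure ℝ) (hτ : ∀ᵐ t ∂τ, 0 < t) {F H : ℝ → ℝ≥0∞}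
    (hF : Measurable F) (hH : Measurable H) (hFm : MonotoneOn F (Ioi 0))
    (hHm : AntitoneOn H (Ioi 0)) :
    (∫⁻ t, F t * H t ∂τ) * τ univ ≤ (∫⁻ t, F t ∂τ) * ∫⁻ t, H t ∂τ := by
  -- integrate the rearrangement inequality over two independent copies of the variable
  have key : ∫⁻ s, ∫⁻ t, (F s * H s + F t * H t) ∂τ ∂τ ≤
      ∫⁻ s, ∫⁻ t, (F s * H t + F t * H s) ∂τ ∂τ := by
    refine lintegral_mono_ae (hτ.mono fun s hs => lintegral_mono_ae (hτ.mono fun t ht => ?_))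
    rcases le_total s t with h | h
    · exact rearrange (hFm hs ht h) (hHm hs ht h)
    · rw [add_comm, add_comm (F s * H t)]
      exact rearrange (hFm ht hs h) (hHm ht hs h)
  have e1 : ∫⁻ s, ∫⁻ t, (F s * H s + F t * H t) ∂τ ∂τ =
      2 * ((∫⁻ t, F t * H t ∂τ) * τ univ) := by
    have : ∀ s, ∫⁻ t, (F s * H s + F t * H t) ∂τ =
        F s * H s * τ univ + ∫⁻ t, F t * H t ∂τ := fun s => by
      rw [lintegral_add_left (by fun_prop), lintegral_const]
    simp only [this]
    rw [lintegral_add_left (by fun_prop), lintegral_const, lintegral_mul_const _ (by fun_prop),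
      two_mul]
  have e2 : ∫⁻ s, ∫⁻ t, (F s * H t + F t * H s) ∂τ ∂τ =
      2 * ((∫⁻ t, F t ∂τ) * ∫⁻ t, H t ∂τ) := by
    have : ∀ s, ∫⁻ t, (F s * H t + F t * H s) ∂τ =
        F s * (∫⁻ t, H t ∂τ) + (∫⁻ t, F t ∂τ) * H s := fun s => by
      rw [lintegral_add_left (by fun_prop), lintegral_const_mul _ (by fun_prop),
        lintegral_mul_const _ (by fun_prop)]
    simp only [this]
    rw [lintegral_add_left (by fun_prop), lintegral_mul_const _ (by fun_prop),
      lintegral_const_mul _ (by fun_prop), two_mul]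
  rw [e1, e2] at key
  exact (ENNReal.mul_le_mul_iff_right two_ne_zero ENNReal.ofNat_ne_top).1 key

/-- Under the weight `wt p a · K ∘ qf p`, a radially nondecreasing function and a nonincreasing
function of `qf p` are negatively correlated (unnormalized form). -/
lemma radial_chebyshev [Nonempty ι] (hp : 0 < p) {φ : (ι → ℝ) → ℝ≥0∞} (hφ : Measurable φ)
    (hφm : RadMono φ) {K H : ℝ → ℝ≥0∞} (hK : Measurable K) (hH : Measurable H)
    (hHm : Antitone H) :
    (∫⁻ u, wt p a u * (K (qf p u) * φ u * H (qf p u))) * ∫⁻ u, wt p a u * K (qf p u) ≤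
      (∫⁻ u, wt p a u * (K (qf p u) * φ u)) * ∫⁻ u, wt p a u * (K (qf p u) * H (qf p u)) := by
  obtain ⟨D, σ, hD, hσ, hσ1, h⟩ := lintegral_polar_wt (a := a) hp
  set ν := (volume : Measure (ι → ℝ)).toSphere
  set τ := (volume.restrict (Ioi (0 : ℝ))).withDensity
    (fun t => ENNReal.ofReal (t ^ (p * ∑ j, a j - 1)) * K (t ^ p)) with hτ
  have hτ0 : ∀ᵐ t ∂τ, 0 < t :=
    (withDensity_absolutelyContinuous _ _).ae_le (ae_restrict_mem measurableSet_Ioi)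
  -- integrals of `φ` against radial functions reduce to one-dimensional ones
  have red : ∀ (ψ : (ι → ℝ) → ℝ≥0∞) (L : ℝ → ℝ≥0∞), Measurable ψ → Measurable L →
      ∫⁻ u, wt p a u * (K (qf p u) * ψ u * L (qf p u)) =
        ∫⁻ t, (∫⁻ θ, D θ * ψ (t • σ θ) ∂ν) * L (t ^ p) ∂τ := by
    intro ψ L hψ hL
    have hm : Measurable fun t : ℝ => ∫⁻ θ, D θ * ψ (t • σ θ) ∂ν :=
      Measurable.lintegral_prod_right' (f := fun z : ℝ × _ => D z.2 * ψ (z.1 • σ z.2))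
        (by fun_prop)
    rw [h _ (by fun_prop), hτ, lintegral_withDensity_eq_lintegral_mul _ (by fun_prop)
      (by fun_prop)]
    have : ∀ θ, D θ * (∫⁻ t in Ioi (0 : ℝ), ENNReal.ofReal (t ^ (p * ∑ j, a j - 1)) *
        (K (qf p (t • σ θ)) * ψ (t • σ θ) * L (qf p (t • σ θ)))) =
        ∫⁻ t in Ioi (0 : ℝ), (ENNReal.ofReal (t ^ (p * ∑ j, a j - 1)) * K (t ^ p)) * L (t ^ p) *
          (D θ * ψ (t • σ θ)) := fun θ => by
      rw [← lintegral_const_mul _ (by fun_prop)]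
      refine setLIntegral_congr_fun measurableSet_Ioi fun t ht => ?_
      simp only [qf_smul (le_of_lt ht), hσ1, mul_one]
      ring
    simp only [this]
    rw [lintegral_lintegral_swap (by fun_prop)]
    refine lintegral_congr fun t => ?_
    rw [lintegral_const_mul _ (by fun_prop)]
    simp only [Pi.mul_apply]
    ring
  set F : ℝ → ℝ≥0∞ := fun t => ∫⁻ θ, D θ * φ (t • σ θ) ∂ν with hF
  have hFm : Measurable F :=
    Measurable.lintegral_prod_right' (f := fun z : ℝ × _ => D z.2 * φ (z.1 • σ z.2))
      (by fun_prop)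
  have hch := chebyshev τ hτ0 hFm (H := fun t => H (t ^ p)) (by fun_prop)
    (fun s hs t ht hst => lintegral_mono fun θ => by
      gcongr
      exact hφm _ _ _ (le_of_lt hs) hst)
    (fun s hs t ht hst => hHm (Real.rpow_le_rpow (le_of_lt hs) hst hp.le))
  have r1 := red φ H hφ hH
  have r2 := red φ (fun _ => 1) hφ measurable_const
  have r3 := red (fun _ => 1) H measurable_const hH
  have r4 := red (fun _ => 1) (fun _ => 1) measurable_const measurable_const
  simp only [mul_one] at r2 r3 r4
  rw [r1, r2, r3, r4, lintegral_const, lintegral_const_mul _ (by fun_prop)]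
  calc _ = (∫⁻ θ, D θ ∂ν) * ((∫⁻ t, F t * H (t ^ p) ∂τ) * τ univ) := by ring
    _ ≤ (∫⁻ θ, D θ ∂ν) * ((∫⁻ t, F t ∂τ) * ∫⁻ t, H (t ^ p) ∂τ) := by gcongr
    _ = _ := by ring

end
/-! ### Two complementary blocks -/

/-- The unnormalized expectation of `φ u * ψ v` when the vector is split into blocks `u`, `v`. -/
def blockInt {ι κ : Type*} [Fintype ι] [Fintype κ] (p b : ℝ) (a : ι → ℝ) (a' : κ → ℝ)
    (φ : (ι → ℝ) → ℝ≥0∞) (ψ : (κ → ℝ) → ℝ≥0∞) : ℝ≥0∞ :=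
  ∫⁻ u, ∫⁻ v, wt p a u * wt p a' v * kk b (1 - qf p u - qf p v) * (φ u * ψ v)

lemma blockInt_neg {ι κ : Type*} [Fintype ι] [Fintype κ] [Nonempty ι] {p b : ℝ} (hp : 0 < p)
    {a : ι → ℝ} {a' : κ → ℝ}
    {φ : (ι → ℝ) → ℝ≥0∞} {ψ : (κ → ℝ) → ℝ≥0∞} (hφ : Measurable φ) (hψ : Measurable ψ)
    (hφm : RadMono φ) (hψm : RadMono ψ) :
    blockInt p b a a' φ ψ * blockInt p b a a' 1 1 ≤
      blockInt p b a a' φ 1 * blockInt p b a a' 1 ψ := by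
  set K : ℝ → ℝ≥0∞ := fun t => ENNReal.ofReal ((1 - t) ^ (∑ j, a' j)) * kk b (1 - t) with hK
  let H : ((κ → ℝ) → ℝ≥0∞) → ℝ → ℝ≥0∞ := fun ψ t =>
    ∫⁻ v, wt p a' v * (kk b (1 - qf p v) * ψ ((max (1 - t) 0) ^ (1 / p) • v))
  have hKm : Measurable K := by fun_prop
  have hHm : ∀ {ψ : (κ → ℝ) → ℝ≥0∞}, Measurable ψ → Measurable (H ψ) := fun {ψ} hψ =>
    Measurable.lintegral_prod_right' (f := fun z : ℝ × (κ → ℝ) =>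
      wt p a' z.2 * (kk b (1 - qf p z.2) * ψ ((max (1 - z.1) 0) ^ (1 / p) • z.2))) (by fun_prop)
  have red : ∀ (φ : (ι → ℝ) → ℝ≥0∞) (ψ : (κ → ℝ) → ℝ≥0∞), Measurable ψ →
      blockInt p b a a' φ ψ = ∫⁻ u, wt p a u * (K (qf p u) * φ u * H ψ (qf p u)) := by
    intro φ ψ hψ
    refine lintegral_congr fun u => ?_
    have := inner_scale (b := b) (a := a') hp (1 - qf p u) hψ
    calc _ = ∫⁻ v, wt p a u * φ u * (wt p a' v * (kk b (1 - qf p u - qf p v) * ψ v)) :=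
          lintegral_congr fun v => by ring
      _ = _ := by
        rw [lintegral_const_mul _ (by fun_prop), this]
        simp only [K, H]
        ring
  have hanti : Antitone (H ψ) := fun s t hst => lintegral_mono fun v => by
    gcongr
    refine hψm _ _ _ (by positivity) ?_
    gcongr
  have hcst : ∀ t, H 1 t = H 1 0 := fun t => rfl
  have hc := radial_chebyshev (a := a) hp hφ hφm hKm (hHm hψ) hanti
  rw [red _ _ hψ, red _ _ measurable_one, red _ _ measurable_one, red _ _ hψ]
  simp only [hcst, ← mul_assoc, Pi.one_apply, mul_one] at hc ⊢
  rw [lintegral_mul_const _ (by fun_prop), lintegral_mul_const _ (by fun_prop)]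
  exact (mul_assoc _ _ _).symm.trans_le
    ((mul_le_mul' hc (le_refl (H 1 0))).trans_eq (mul_right_comm _ _ _))

lemma lintegral_block {N : ℕ} {p : ℝ} {a : Fin N → ℝ} {b : ℝ}
    (A : Set (Fin N)) [DecidablePred (· ∈ A)]
    {φ : ({i // i ∈ A} → ℝ) → ℝ≥0∞} {ψ : ({i // i ∉ A} → ℝ) → ℝ≥0∞}
    (hφ : Measurable φ) (hψ : Measurable ψ) :
    ∫⁻ x, φ (fun i => x i) * ψ (fun i => x i)
      ∂((volume.restrict (pBall N p)).withDensity fun x =>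
        ENNReal.ofReal ((1 - ∑ i, |x i| ^ p) ^ (b - 1) * ∏ j, |x j| ^ (p * a j - 1))) =
      blockInt p b (fun i : {i // i ∈ A} => a i) (fun i : {i // i ∉ A} => a i) φ ψ := by
  have hB : MeasurableSet (pBall N p) :=
    measurableSet_lt (f := fun x : Fin N → ℝ => ∑ i, |x i| ^ p) (by fun_prop) (by fun_prop)
  have hmp := volume_preserving_piEquivPiSubtypeProd (fun _ : Fin N => ℝ) (· ∈ A)
  rw [lintegral_withDensity_eq_lintegral_mul _ (by fun_prop) (by fun_prop),
    ← lintegral_indicator hB, blockInt, ← lintegral_prod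
      (fun z : ({i // i ∈ A} → ℝ) × ({i // i ∉ A} → ℝ) =>
        wt p (fun i : {i // i ∈ A} => a i) z.1 * wt p (fun i : {i // i ∉ A} => a i) z.2 *
          kk b (1 - qf p z.1 - qf p z.2) * (φ z.1 * ψ z.2)) (by fun_prop)]
  rw [← Measure.volume_eq_prod, ← hmp.lintegral_comp (by fun_prop)]
  refine lintegral_congr fun x => ?_
  have hq : ∑ i, |x i| ^ p = qf p (fun i : {i // i ∈ A} => x i) +
      qf p (fun i : {i // i ∉ A} => x i) :=
    (Fintype.sum_subtype_add_sum_subtype (· ∈ A) (fun i => |x i| ^ p)).symm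
  have hw : ∏ j, ENNReal.ofReal (|x j| ^ (p * a j - 1)) =
      wt p (fun i : {i // i ∈ A} => a i) (fun i => x i) *
        wt p (fun i : {i // i ∉ A} => a i) (fun i => x i) :=
    (Fintype.prod_subtype_mul_prod_subtype (· ∈ A)
      (fun j => ENNReal.ofReal (|x j| ^ (p * a j - 1)))).symm
  simp only [MeasurableEquiv.piEquivPiSubtypeProd, MeasurableEquiv.coe_mk,
    Equiv.piEquivPiSubtypeProd_apply]
  rw [sub_sub, ← hq, ← hw]
  by_cases hx : ∑ i, |x i| ^ p < 1
  · rw [indicator_of_mem (show x ∈ pBall N p from hx), kk, if_pos (by linarith), Pi.mul_apply,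
      ENNReal.ofReal_mul (Real.rpow_nonneg (by linarith) _),
      ENNReal.ofReal_prod_of_nonneg (fun _ _ => by positivity)]
    ring
  · rw [indicator_of_notMem (show x ∉ pBall N p from hx), kk, if_neg (by linarith)]
    simp

lemma radMono_ofReal_abs {ι : Type*} {g : (ι → ℝ) → ℝ} (hg : Monotone g) :
    RadMono fun x => ENNReal.ofReal (g fun i => |x i|) := by
  intro x s t hs hst
  refine ENNReal.ofReal_le_ofReal (hg fun i => ?_)
  simp only [Pi.smul_apply, smul_eq_mul, abs_mul, abs_of_nonneg hs, abs_of_nonneg (hs.trans hst)]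
  gcongr

/-! ### Negative association -/

lemma lintegral_neg_assoc {N : ℕ} {p : ℝ} (hp : 1 ≤ p)
    {a : Fin N → ℝ} {b : ℝ} (μ : Measure (Fin N → ℝ)) [IsProbabilityMeasure μ] (Z : ℝ≥0∞)
    (hμ : μ = Z • ((volume.restrict (pBall N p)).withDensity fun x =>
      ENNReal.ofReal ((1 - ∑ i, |x i| ^ p) ^ (b - 1) * ∏ j, |x j| ^ (p * a j - 1))))
    (A : Set (Fin N)) (hA : A.Nonempty)
    {φ : ({i // i ∈ A} → ℝ) → ℝ≥0∞} {ψ : ({i // i ∉ A} → ℝ) → ℝ≥0∞}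
    (hφ : Measurable φ) (hψ : Measurable ψ) (hφm : RadMono φ) (hψm : RadMono ψ) :
    ∫⁻ x, φ (fun i => x i) * ψ (fun i => x i) ∂μ ≤
      (∫⁻ x, φ (fun i => x i) ∂μ) * ∫⁻ x, ψ (fun i => x i) ∂μ := by
  classical
  have : Nonempty {i // i ∈ A} := hA.to_subtype
  have e : ∀ {φ : ({i // i ∈ A} → ℝ) → ℝ≥0∞} {ψ : ({i // i ∉ A} → ℝ) → ℝ≥0∞},
      Measurable φ → Measurable ψ → ∫⁻ x, φ (fun i => x i) * ψ (fun i => x i) ∂μ =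
        Z * blockInt p b (fun i : {i // i ∈ A} => a i) (fun i : {i // i ∉ A} => a i) φ ψ := by
    intro φ ψ hφ hψ
    rw [hμ, lintegral_smul_measure, smul_eq_mul, lintegral_block A hφ hψ]
  have e1 := e hφ measurable_one
  have e2 := e measurable_one hψ
  have e3 := e (φ := 1) (ψ := 1) measurable_one measurable_one
  simp only [Pi.one_apply, mul_one, one_mul, lintegral_one, measure_univ] at e1 e2 e3
  rw [e1, e2, e hφ hψ]
  have h := blockInt_neg (b := b) (a := fun i : {i // i ∈ A} => a i)
    (a' := fun i : {i // i ∉ A} => a i) (zero_lt_one.trans_le hp) hφ hψ hφm hψm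
  calc _ = Z * blockInt p b (fun i : {i // i ∈ A} => a i) (fun i : {i // i ∉ A} => a i) φ ψ *
        (Z * blockInt p b (fun i : {i // i ∈ A} => a i) (fun i : {i // i ∉ A} => a i) 1 1) := by
        rw [← e3, mul_one]
    _ = Z * Z * (blockInt p b (fun i : {i // i ∈ A} => a i) (fun i : {i // i ∉ A} => a i) φ ψ *
        blockInt p b (fun i : {i // i ∈ A} => a i) (fun i : {i // i ∉ A} => a i) 1 1) := by ring
    _ ≤ Z * Z * _ := mul_le_mul' le_rfl h
    _ = _ := by ring

/-- Covariances do not change under addition of constants, so negative correlation of bounded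
functions can be checked on nonnegative shifts of them, with Lebesgue integrals. -/
lemma integral_mul_le_of_lintegral {Ω : Type*} [MeasurableSpace Ω] (μ : Measure Ω)
    [IsProbabilityMeasure μ] {F G : Ω → ℝ} (hF : Measurable F) (hG : Measurable G) {M M' : ℝ}
    (hM : ∀ x, |F x| ≤ M) (hM' : ∀ x, |G x| ≤ M')
    (h : ∫⁻ x, ENNReal.ofReal (F x + M) * ENNReal.ofReal (G x + M') ∂μ ≤
      (∫⁻ x, ENNReal.ofReal (F x + M) ∂μ) * ∫⁻ x, ENNReal.ofReal (G x + M') ∂μ) :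
    ∫ x, F x * G x ∂μ ≤ (∫ x, F x ∂μ) * ∫ x, G x ∂μ := by
  have iF : Integrable F μ := .of_bound hF.aestronglyMeasurable M (.of_forall hM)
  have iG : Integrable G μ := .of_bound hG.aestronglyMeasurable M' (.of_forall hM')
  have iFG : Integrable (fun x => F x * G x) μ :=
    iF.mul_bdd (c := M') hG.aestronglyMeasurable (.of_forall hM')
  have F0 : ∀ x, 0 ≤ F x + M := fun x => by linarith [neg_le_of_abs_le (hM x)]
  have G0 : ∀ x, 0 ≤ G x + M' := fun x => by linarith [neg_le_of_abs_le (hM' x)]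
  have eF : ∫ x, (F x + M) ∂μ = (∫ x, F x ∂μ) + M := by
    rw [integral_add iF (integrable_const _)]; simp
  have eG : ∫ x, (G x + M') ∂μ = (∫ x, G x ∂μ) + M' := by
    rw [integral_add iG (integrable_const _)]; simp
  have ex : (fun x => (F x + M) * (G x + M')) =
      fun x => F x * G x + (M' * F x + (M * G x + M * M')) := by ext x; ring
  have i3 : Integrable (fun x => M * G x + M * M') μ := (iG.const_mul M).add (integrable_const _)
  have i2 : Integrable (fun x => M' * F x + (M * G x + M * M')) μ := (iF.const_mul M').add i3
  have eFG : ∫ x, (F x + M) * (G x + M') ∂μ =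
      (∫ x, F x * G x ∂μ) + (M' * (∫ x, F x ∂μ) + (M * (∫ x, G x ∂μ) + M * M')) := by
    rw [ex, integral_add iFG i2, integral_add (iF.const_mul M') i3,
      integral_add (iG.const_mul M) (integrable_const _), integral_const_mul, integral_const_mul]
    simp
  simp only [← ENNReal.ofReal_mul (F0 _)] at h
  rw [← ofReal_integral_eq_lintegral_ofReal (by rw [ex]; exact iFG.add i2)
      (.of_forall fun x => mul_nonneg (F0 x) (G0 x)),
    ← ofReal_integral_eq_lintegral_ofReal (f := fun x => F x + M)
      (iF.add (integrable_const _)) (.of_forall F0),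
    ← ofReal_integral_eq_lintegral_ofReal (f := fun x => G x + M')
      (iG.add (integrable_const _)) (.of_forall G0),
    ← ENNReal.ofReal_mul (integral_nonneg F0),
    ENNReal.ofReal_le_ofReal_iff (mul_nonneg (integral_nonneg F0) (integral_nonneg G0)),
    eFG, eF, eG] at h
  linarith

/-- Negative association of the moduli of the coordinates for the distribution on
`𝔹_{N,p}` with density proportional to `(1-‖x‖_p^p)^{b-1} ∏_j |x_j|^{p a_j - 1}`:
for disjoint index sets and bounded measurable coordinatewise nondecreasing functions
of the respective coordinates, `E[f₁(|X|) f₂(|X|)] ≤ E[f₁(|X|)] E[f₂(|X|)]`. -/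
theorem statement12 (N : ℕ) (hN : 1 ≤ N) (p : ℝ) (hp : 1 ≤ p)
    (a : Fin N → ℝ) (b : ℝ) (ha : ∀ j, 0 < a j) (hb : 0 < b)
    (μ : Measure (Fin N → ℝ)) [IsProbabilityMeasure μ]
    (Z : ℝ≥0∞)   -- normalizing constant: the density is *proportional* to the stated one
    (hμ : μ = Z • ((volume.restrict (pBall N p)).withDensity fun x =>
      ENNReal.ofReal ((1 - ∑ i, |x i| ^ p) ^ (b - 1) * ∏ j, |x j| ^ (p * a j - 1))))
    (A₁ A₂ : Set (Fin N)) (hdisj : Disjoint A₁ A₂)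
    (f₁ f₂ : (Fin N → ℝ) → ℝ)
    (hmeas₁ : Measurable f₁) (hmeas₂ : Measurable f₂)
    (hbdd₁ : ∃ M, ∀ x, |f₁ x| ≤ M) (hbdd₂ : ∃ M, ∀ x, |f₂ x| ≤ M)
    (hmono₁ : Monotone f₁) (hmono₂ : Monotone f₂)
    (hdep₁ : ∀ x y : Fin N → ℝ, (∀ i ∈ A₁, x i = y i) → f₁ x = f₁ y)
    (hdep₂ : ∀ x y : Fin N → ℝ, (∀ i ∈ A₂, x i = y i) → f₂ x = f₂ y) :
    ∫ x, f₁ (fun i => |x i|) * f₂ (fun i => |x i|) ∂μ ≤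
      (∫ x, f₁ (fun i => |x i|) ∂μ) * ∫ x, f₂ (fun i => |x i|) ∂μ := by
  classical
  rcases A₁.eq_empty_or_nonempty with rfl | hA
  · have hc : ∀ x, f₁ x = f₁ 0 := fun x => hdep₁ _ _ (by simp)
    simp [hc, integral_const_mul]
  obtain ⟨M₁, hM₁⟩ := hbdd₁
  obtain ⟨M₂, hM₂⟩ := hbdd₂
  refine integral_mul_le_of_lintegral μ (by fun_prop) (by fun_prop) (fun x => hM₁ _)
    (fun x => hM₂ _) ?_
  -- the functions on the two blocks, shifted to be nonnegative: extend a block vector by zero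
  let g₁ : ({i // i ∈ A₁} → ℝ) → ℝ := fun u => f₁ (fun i => if h : i ∈ A₁ then u ⟨i, h⟩ else 0) + M₁
  let g₂ : ({i // i ∉ A₁} → ℝ) → ℝ := fun v => f₂ (fun i => if h : i ∉ A₁ then v ⟨i, h⟩ else 0) + M₂
  have hg₁ : Measurable g₁ := by
    refine (hmeas₁.comp (measurable_pi_lambda _ fun i => ?_)).add_const _
    by_cases h : i ∈ A₁ <;> simp only [h, dite_true, dite_false] <;> fun_prop
  have hg₂ : Measurable g₂ := by
    refine (hmeas₂.comp (measurable_pi_lambda _ fun i => ?_)).add_const _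
    by_cases h : i ∈ A₁ <;> simp only [h, not_true, not_false_eq_true, dite_true, dite_false] <;> fun_prop
  have hg₁m : Monotone g₁ := fun u v huv => by
    refine add_le_add_left (hmono₁ fun i => ?_) _
    by_cases h : i ∈ A₁ <;> simp [h, huv _]
  have hg₂m : Monotone g₂ := fun u v huv => by
    refine add_le_add_left (hmono₂ fun i => ?_) _
    by_cases h : i ∈ A₁ <;> simp [h, huv _]
  have e₁ : ∀ x : Fin N → ℝ, f₁ (fun i => |x i|) + M₁ = g₁ fun i => |x i| := fun x => by
    refine congrArg (· + M₁) (hdep₁ _ _ fun i hi => ?_)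
    simp [hi]
  have e₂ : ∀ x : Fin N → ℝ, f₂ (fun i => |x i|) + M₂ = g₂ fun i => |x i| := fun x => by
    refine congrArg (· + M₂) (hdep₂ _ _ fun i hi => ?_)
    simp [disjoint_right.1 hdisj hi]
  simp only [e₁, e₂]
  exact lintegral_neg_assoc hp μ Z hμ A₁ hA (φ := fun u => ENNReal.ofReal (g₁ fun i => |u i|))
    (ψ := fun v => ENNReal.ofReal (g₂ fun i => |v i|)) (by fun_prop) (by fun_prop)
    (radMono_ofReal_abs hg₁m) (radMono_ofReal_abs hg₂m)

end
end
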